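/- arXiv:2306.14593 — 3 statements merged into one kernel-verified Lean document; each statement's English description precedes it below -/
import Mathlib

section
/- There exists an laVASS V of dimension 2 over the alphabet Σ₂ = {0,1}² such that L(V) is zero-closed and ⟦L(V)⟧ = {(x, y) ∈ ℕ² : x = 2^y}. Moreover, V can be taken to be a restricted laVASS with a single counter pair. -/
/-- A labelled affine VASS: a finite set of control states `Q`, dimension `d`, alphabet `σ`,
a finite set of transitions `Δ ⊆ Q × σ × Q`, an update function assigning to each transition
and each counter an affine function `x ↦ a·x + b` (coded by the pair `(a, b)`), an initial
control state, a set of final control states and a set of final counter values. -/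
structure LAVASS (σ : Type) (d : ℕ) where
  Q : Type
  fintypeQ : Fintype Q
  Δ : Set (Q × σ × Q)
  finΔ : Δ.Finite
  upd : Q × σ × Q → Fin d → ℤ × ℤ
  init : Q
  F : Set Q
  Sf : Set (Fin d → ℕ)

namespace LAVASS

variable {σ : Type} {d : ℕ}

/-- Configurations: a control state together with `d` counter values in `ℕ`. -/
abbrev Config (V : LAVASS σ d) := V.Q × (Fin d → ℕ)

/-- The initial configuration `(q₀, 0, …, 0)`. -/
def initConfig (V : LAVASS σ d) : V.Config := (V.init, fun _ => 0)

/-- One step of the configuration graph, reading letter `a`: there is a transition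
`(q, a, q') ∈ Δ` and every counter is updated by its affine function, the result being
a natural number (non-negativity is built into the type). -/
def Step (V : LAVASS σ d) (c : V.Config) (a : σ) (c' : V.Config) : Prop :=
  (c.1, a, c'.1) ∈ V.Δ ∧
    ∀ i : Fin d,
      (c'.2 i : ℤ) = (V.upd (c.1, a, c'.1) i).1 * (c.2 i : ℤ) + (V.upd (c.1, a, c'.1) i).2

/-- Extension of the step relation to words. -/
def Reach (V : LAVASS σ d) : V.Config → List σ → V.Config → Prop
  | c, [], c' => c = c'
  | c, a :: w, c' => ∃ c₁, Step V c a c₁ ∧ Reach V c₁ w c'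

/-- The language of `V`: words leading from the initial configuration to a final one. -/
def Lang (V : LAVASS σ d) : Set (List σ) :=
  {w | ∃ c', Reach V V.initConfig w c' ∧ c'.1 ∈ V.F ∧ c'.2 ∈ V.Sf}

/-- A run from the initial configuration, as a list of successive configurations. -/
def IsRunFromInit (V : LAVASS σ d) (cs : List V.Config) : Prop :=
  cs.head? = some V.initConfig ∧ cs.Chain' (fun c c' => ∃ a, Step V c a c')

end LAVASS

/-- Index of the counter `x_i` in a counter pair `(x_i, y_i)`. -/
def xIdx {d : ℕ} (i : Fin d) : Fin (2 * d) := ⟨2 * i.1, by omega⟩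

/-- Index of the counter `y_i` in a counter pair `(x_i, y_i)`. -/
def yIdx {d : ℕ} (i : Fin d) : Fin (2 * d) := ⟨2 * i.1 + 1, by omega⟩

/-- A restricted laVASS: an laVASS of dimension `2d` whose counters form pairs `(x_i, y_i)`
such that (i) every update on `x_i` is the identity or the increment and every update on
`y_i` is `x ↦ 2x` or `x ↦ 2x+1`; (ii) along every run from the initial configuration, once
an increment is applied to `x_i`, every subsequent transition increments `x_i`; and
(iii) the final counter values are exactly those with `x_i = y_i` for all `i`. -/
def IsRestricted {σ : Type} (d : ℕ) (V : LAVASS σ (2 * d)) : Prop :=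
  (∀ t ∈ V.Δ, ∀ i : Fin d,
      (V.upd t (xIdx i) = (1, 0) ∨ V.upd t (xIdx i) = (1, 1)) ∧
      (V.upd t (yIdx i) = (2, 0) ∨ V.upd t (yIdx i) = (2, 1))) ∧
  (∀ cs : List V.Config, V.IsRunFromInit cs → ∀ i : Fin d,
      ∀ j : ℕ, ∀ hj : j + 1 < cs.length,
        (cs.get ⟨j + 1, hj⟩).2 (xIdx i) = (cs.get ⟨j, by omega⟩).2 (xIdx i) + 1 →
        ∀ j' : ℕ, j ≤ j' → ∀ hj' : j' + 1 < cs.length,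
          (cs.get ⟨j' + 1, hj'⟩).2 (xIdx i) = (cs.get ⟨j', by omega⟩).2 (xIdx i) + 1) ∧
  V.Sf = {v | ∀ i : Fin d, v (xIdx i) = v (yIdx i)}

/-- `⟦w⟧ ∈ ℕ^k`: the tuple denoted by a word over `{0,1}^k` in msd-first notation. -/
def wordVal {k : ℕ} (w : List (Fin k → Bool)) : Fin k → ℕ :=
  w.foldl (fun acc u j => 2 * acc j + (u j).toNat) fun _ => 0

/-- A language over `{0,1}^k` is zero-closed if `L = 0⃗^* · L`. -/
def ZeroClosed {k : ℕ} (L : Set (List (Fin k → Bool))) : Prop :=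
  L = {w | ∃ (p : ℕ) (u : List (Fin k → Bool)),
        u ∈ L ∧ w = List.replicate p (fun _ => false) ++ u}

/-- `‖A‖_{1,∞}`: the maximum over the rows of the sum of absolute values of the entries. -/
def matNorm {m n : ℕ} (A : Matrix (Fin m) (Fin n) ℤ) : ℕ :=
  Finset.univ.sup fun i => ∑ j, (A i j).natAbs

/-- `‖b‖_∞`: the maximum absolute value of the entries. -/
def vecNorm {m : ℕ} (b : Fin m → ℤ) : ℕ :=
  Finset.univ.sup fun i => (b i).natAbs

/-- The automaton: state `false` before the leading `1` of the first track, `true` after. -/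
def expV : LAVASS (Fin 2 → Bool) (2 * 1) where
  Q := Bool
  fintypeQ := inferInstance
  Δ := {t | (t.1 = false ∧ t.2.2 = t.2.1 0) ∨ (t.1 = true ∧ t.2.1 0 = false ∧ t.2.2 = true)}
  finΔ := Set.toFinite _
  upd := fun t i => if i.1 = 0 then (if t.1 = true then (1, 1) else (1, 0))
    else (if t.2.1 1 = true then (2, 1) else (2, 0))
  init := false
  F := {true}
  Sf := {v | ∀ i : Fin 1, v (xIdx i) = v (yIdx i)}

/-- A constructor for configurations. -/
def expC (q : Bool) (a b : ℕ) : expV.Config := (q, fun i => if i.1 = 0 then a else b)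

theorem expC_surj (c : expV.Config) : ∃ q a b, c = expC q a b := by
  obtain ⟨q, v⟩ := c
  refine ⟨q, v 0, v 1, ?_⟩
  unfold expC
  congr 1
  funext i
  match i with
  | ⟨0, _⟩ => rfl
  | ⟨1, _⟩ => rfl

theorem exp_step (q : Bool) (a b : ℕ) (l : Fin 2 → Bool) (q' : Bool) (a' b' : ℕ) :
    expV.Step (expC q a b) l (expC q' a' b') ↔
      ((q = false ∧ q' = l 0) ∨ (q = true ∧ l 0 = false ∧ q' = true)) ∧
        a' = a + q.toNat ∧ b' = 2 * b + (l 1).toNat := by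
  have h : (∀ i : Fin (2 * 1), (((expC q' a' b').2 i : ℕ) : ℤ) =
      (expV.upd (q, l, q') i).1 * ((expC q a b).2 i : ℤ) + (expV.upd (q, l, q') i).2) ↔
      (a' = a + q.toNat ∧ b' = 2 * b + (l 1).toNat) := by
    refine (Fin.forall_fin_two (p := fun i : Fin 2 => (((expC q' a' b').2 i : ℕ) : ℤ) =
      (expV.upd (q, l, q') i).1 * ((expC q a b).2 i : ℤ) + (expV.upd (q, l, q') i).2)).trans ?_
    simp only [expC, expV]
    rcases Bool.eq_false_or_eq_true (l 1) with hl | hl <;> cases q <;> simp [hl] <;> omega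
  exact and_congr Iff.rfl h

theorem exp_reach_snoc (u : List (Fin 2 → Bool)) (l : Fin 2 → Bool) (c c' c'' : expV.Config)
    (h : expV.Reach c u c') (hs : expV.Step c' l c'') : expV.Reach c (u ++ [l]) c'' := by
  induction u generalizing c with
  | nil => cases h; exact ⟨c'', hs, rfl⟩
  | cons x u ih =>
    obtain ⟨c₁, h1, h2⟩ := h
    exact ⟨c₁, h1, ih c₁ h2⟩

theorem exp_init : expV.initConfig = expC false 0 0 := by
  unfold LAVASS.initConfig expC
  simp [expV]

/-- The run invariant. -/
def expInv (q : Bool) (a b : ℕ) (acc : Fin 2 → ℕ) : Prop :=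
  (q = false → acc 0 = 0 ∧ a = 0) ∧ (q = true → acc 0 = 2 ^ a) ∧ b = acc 1

theorem exp_inv_reach (w : List (Fin 2 → Bool)) (q : Bool) (a b : ℕ) (acc : Fin 2 → ℕ)
    (hI : expInv q a b acc) (q' : Bool) (a' b' : ℕ)
    (h : expV.Reach (expC q a b) w (expC q' a' b')) :
    expInv q' a' b' (w.foldl (fun acc u j => 2 * acc j + (u j).toNat) acc) := by
  induction w generalizing q a b acc with
  | nil =>
    have h : expC q a b = expC q' a' b' := h
    have h1 : q = q' := congrArg Prod.fst h
    have h2 : a = a' := congrFun (congrArg Prod.snd h) 0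
    have h3 : b = b' := congrFun (congrArg Prod.snd h) 1
    subst h1 h2 h3
    exact hI
  | cons l w ih =>
    obtain ⟨c₁, h1, h2⟩ := h
    obtain ⟨q₁, a₁, b₁, rfl⟩ := expC_surj c₁
    refine ih q₁ a₁ b₁ _ ?_ h2
    rw [exp_step] at h1
    obtain ⟨hq, rfl, rfl⟩ := h1
    obtain ⟨i1, i2, i3⟩ := hI
    rcases hq with ⟨rfl, rfl⟩ | ⟨rfl, hl, rfl⟩
    · obtain ⟨i4, i5⟩ := i1 rfl
      refine ⟨fun h => ?_, fun h => ?_, ?_⟩ <;> simp_all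
    · have := i2 rfl
      refine ⟨fun h => ?_, fun h => ?_, ?_⟩ <;> simp_all [pow_succ, mul_comm]

theorem exp_complete (p N : ℕ) (hN : N < 2 ^ (p + 1)) :
    ∃ w, expV.Reach expV.initConfig w (expC true p N) := by
  rw [exp_init]
  induction p generalizing N with
  | zero =>
    refine ⟨[![true, decide (N = 1)]], expC true 0 N, ?_, rfl⟩
    rw [exp_step]
    have : N = 0 ∨ N = 1 := by omega
    rcases this with rfl | rfl <;> simp
  | succ p ih =>
    obtain ⟨w, hw⟩ := ih (N / 2) (by rw [pow_succ] at hN; omega)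
    refine ⟨w ++ [![false, decide (N % 2 = 1)]], exp_reach_snoc _ _ _ _ _ hw ?_⟩
    rw [exp_step]
    refine ⟨by simp, by simp, ?_⟩
    rcases Nat.mod_two_eq_zero_or_one N with h | h <;> simp [h] <;> omega

theorem exp_lang (w : List (Fin 2 → Bool)) :
    w ∈ expV.Lang ↔ ∃ n, expV.Reach expV.initConfig w (expC true n n) := by
  constructor
  · rintro ⟨c, hc, hF, hS⟩
    obtain ⟨q, a, b, rfl⟩ := expC_surj c
    have h1 : q = true := hF
    have h2 : a = b := hS 0
    subst h1 h2
    exact ⟨a, hc⟩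
  · rintro ⟨n, hn⟩
    refine ⟨_, hn, rfl, fun i => ?_⟩
    simp [expC]

theorem exp_zero (p : ℕ) (u : List (Fin 2 → Bool)) (hu : u ∈ expV.Lang) :
    List.replicate p (fun _ => false) ++ u ∈ expV.Lang := by
  rw [exp_lang] at *
  obtain ⟨n, hn⟩ := hu
  refine ⟨n, ?_⟩
  induction p with
  | zero => simpa using hn
  | succ p ih =>
    rw [List.replicate_succ, List.cons_append]
    refine ⟨_, ?_, ih⟩
    rw [exp_init, exp_step]
    simp

theorem exp_restricted : IsRestricted 1 expV := by
  refine ⟨?_, ?_, rfl⟩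
  · intro t _ i
    constructor
    · simp only [expV, xIdx]
      have : i.1 = 0 := by omega
      by_cases h : t.1 = true <;> simp [h]
    · simp only [expV, yIdx]
      by_cases h : t.2.1 1 = true <;> simp [h]
  · intro cs hcs i j hj hinc
    have hi : xIdx i = (0 : Fin (2 * 1)) := by
      apply Fin.ext; simp [xIdx]
    rw [hi] at hinc ⊢
    have hch : ∀ k (hk : k + 1 < cs.length),
        ∃ a, expV.Step (cs.get ⟨k, by omega⟩) a (cs.get ⟨k + 1, hk⟩) := by
      intro k hk
      exact List.isChain_iff_getElem.mp hcs.2 k hk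
    have hs1 : ∀ c l c', expV.Step c l c' → c.1 = true → c'.1 = true ∧ c'.2 0 = c.2 0 + 1 := by
      intro c l c' h hc
      obtain ⟨q, a, b, rfl⟩ := expC_surj c
      obtain ⟨q', a', b', rfl⟩ := expC_surj c'
      rw [exp_step] at h
      have hq : q = true := hc
      subst hq
      refine ⟨?_, ?_⟩
      · have : q' = true := by
          rcases h.1 with h | h
          · exact absurd h.1 (by simp)
          · exact h.2.2
        exact this
      · exact h.2.1
    have hs2 : ∀ c l c', expV.Step c l c' → c'.2 0 = c.2 0 + 1 → c.1 = true := by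
      intro c l c' h hc
      obtain ⟨q, a, b, rfl⟩ := expC_surj c
      obtain ⟨q', a', b', rfl⟩ := expC_surj c'
      rw [exp_step] at h
      have h1 : a' = a + 1 := hc
      have h2 := h.2.1
      change q = true
      cases q
      · simp at h2; omega
      · rfl
    have key : ∀ j', j ≤ j' → ∀ hj' : j' + 1 < cs.length,
        (cs.get ⟨j', by omega⟩).1 = true := by
      intro j' hjj
      induction j', hjj using Nat.le_induction with
      | base =>
        intro _
        obtain ⟨a, ha⟩ := hch j hj
        exact hs2 _ _ _ ha hinc
      | succ k hk ih =>
        intro hj'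
        obtain ⟨a, ha⟩ := hch k (by omega)
        exact (hs1 _ _ _ ha (ih (by omega))).1
    intro j' hjj hj'
    obtain ⟨a, ha⟩ := hch j' hj'
    exact (hs1 _ _ _ ha (key j' hjj hj')).2

theorem exp_wordVal (w : List (Fin 2 → Bool)) (n : ℕ)
    (h : expV.Reach expV.initConfig w (expC true n n)) :
    wordVal w 0 = 2 ^ n ∧ wordVal w 1 = n := by
  rw [exp_init] at h
  have := exp_inv_reach w false 0 0 (fun _ => 0) ⟨by simp, by simp, rfl⟩ true n n h
  exact ⟨this.2.1 rfl, this.2.2.symm⟩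

/-- There is a restricted laVASS `V` with a single counter pair (dimension `2·1`) over the
alphabet `{0,1}²` such that `L(V)` is zero-closed and `⟦L(V)⟧ = {(x, y) ∈ ℕ² : x = 2^y}`. -/
theorem exponential_equation_lavass :
    ∃ V : LAVASS (Fin 2 → Bool) (2 * 1),
      IsRestricted 1 V ∧
      ZeroClosed V.Lang ∧
      wordVal '' V.Lang = {v : Fin 2 → ℕ | v 0 = 2 ^ v 1} := by
  refine ⟨expV, exp_restricted, ?_, ?_⟩
  · ext w
    constructor
    · intro h
      exact ⟨0, w, h, by simp⟩
    · rintro ⟨p, u, hu, rfl⟩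
      exact exp_zero p u hu
  · ext v
    constructor
    · rintro ⟨w, hw, rfl⟩
      obtain ⟨n, hn⟩ := (exp_lang w).1 hw
      obtain ⟨h1, h2⟩ := exp_wordVal w n hn
      change wordVal w 0 = 2 ^ wordVal w 1
      rw [h1, h2]
    · intro hv
      have hv : v 0 = 2 ^ v 1 := hv
      obtain ⟨w, hw⟩ := exp_complete (v 1) (v 1)
        (lt_trans Nat.lt_two_pow_self (Nat.pow_lt_pow_right (by omega) (by omega)))
      refine ⟨w, (exp_lang w).2 ⟨_, hw⟩, ?_⟩
      obtain ⟨h1, h2⟩ := exp_wordVal w _ hw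
      funext i
      match i with
      | ⟨0, _⟩ => exact h1.trans hv.symm
      | ⟨1, _⟩ => exact h2
end

section
/- Language emptiness of restricted laVASS is decidable: there exists a computable function g from (encodings of) laVASS presented as finite data (control states {0, …, |Q|−1}, alphabet {0, …, |Σ|−1}, a finite transition list, the integer coefficients of the affine updates, the initial state, the final states, and the final-counter-value condition m_i = n_i for every counter pair) to Bool such that, for every such input V that is a restricted laVASS, g(V) = true if and only if L(V) ≠ ∅. (The paper moreover shows the problem lies in NSPACE(|V| · 2^{O(d)}).) -/
/-- An laVASS presented as finite data: control states `{0, …, states − 1}`, `pairs` counter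
pairs (so `2 * pairs` counters), alphabet `{0, …, alpha − 1}`, a finite list of transitions
`(q, a, q', upd)` where `upd` lists, for each counter, the pair `(a_i, b_i)` of coefficients
of its affine update `x ↦ a_i·x + b_i`, an initial state and a list of final states. The
final-counter-value condition is `x_i = y_i` for every counter pair. -/
structure RawVASS where
  states : ℕ
  pairs : ℕ
  alpha : ℕ
  trans : List (ℕ × ℕ × ℕ × List (ℤ × ℤ))
  init : ℕ
  finals : List ℕ

/-- A configuration: a control state and the list of counter values. -/
abbrev RawConfig : Type := ℕ × List ℕ

/-- One step of the configuration graph, reading letter `a`: some transition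
`(q, a, q', upd)` applies all its affine updates, every resulting counter value being a
natural number (non-negativity is built into the type). -/
def RawVASS.StepR (V : RawVASS) (c : RawConfig) (a : ℕ) (c' : RawConfig) : Prop :=
  ∃ u : List (ℤ × ℤ), (c.1, a, c'.1, u) ∈ V.trans ∧ c'.2.length = c.2.length ∧
    ∀ j < c.2.length,
      (c'.2.getD j 0 : ℤ) =
        (u.getD j ((1 : ℤ), (0 : ℤ))).1 * (c.2.getD j 0 : ℤ) + (u.getD j ((1 : ℤ), (0 : ℤ))).2

/-- Extension of the step relation to words. -/
def RawVASS.ReachR (V : RawVASS) : RawConfig → List ℕ → RawConfig → Prop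
  | c, [], c' => c = c'
  | c, a :: w, c' => ∃ c₁, RawVASS.StepR V c a c₁ ∧ RawVASS.ReachR V c₁ w c'

/-- The initial configuration `(q₀, 0, …, 0)`. -/
def RawVASS.initConfig (V : RawVASS) : RawConfig := (V.init, List.replicate (2 * V.pairs) 0)

/-- The language of `V`: words over the alphabet leading from the initial configuration to
a configuration with a final control state satisfying `x_i = y_i` for every counter pair. -/
def RawVASS.Lang (V : RawVASS) : Set (List ℕ) :=
  {w | (∀ a ∈ w, a < V.alpha) ∧
       ∃ c' : RawConfig, V.ReachR V.initConfig w c' ∧ c'.1 ∈ V.finals ∧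
         ∀ i < V.pairs, c'.2.getD (2 * i) 0 = c'.2.getD (2 * i + 1) 0}

/-- A run from the initial configuration, as a list of successive configurations. -/
def RawVASS.IsRunFromInit (V : RawVASS) (cs : List RawConfig) : Prop :=
  cs.head? = some V.initConfig ∧ cs.Chain' (fun c c' => ∃ a, V.StepR c a c')

/-- The input is a restricted laVASS: (i) in every transition, every update on an
`x`-counter (even index) is the identity `(1,0)` or the increment `(1,1)` and every update
on a `y`-counter (odd index) is `x ↦ 2x` or `x ↦ 2x+1`; (ii) along every run from the
initial configuration, once an `x`-counter is incremented it is incremented by every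
subsequent transition. -/
def RawVASS.Restricted (V : RawVASS) : Prop :=
  (∀ t ∈ V.trans, t.2.2.2.length = 2 * V.pairs ∧
     ∀ i < V.pairs,
       (t.2.2.2.getD (2 * i) ((1 : ℤ), (0 : ℤ)) = (1, 0) ∨
        t.2.2.2.getD (2 * i) ((1 : ℤ), (0 : ℤ)) = (1, 1)) ∧
       (t.2.2.2.getD (2 * i + 1) ((1 : ℤ), (0 : ℤ)) = (2, 0) ∨
        t.2.2.2.getD (2 * i + 1) ((1 : ℤ), (0 : ℤ)) = (2, 1))) ∧
  (∀ cs : List RawConfig, V.IsRunFromInit cs → ∀ i < V.pairs, ∀ j : ℕ,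
     j + 1 < cs.length →
     (cs.getD (j + 1) default).2.getD (2 * i) 0 = (cs.getD j default).2.getD (2 * i) 0 + 1 →
     ∀ j', j ≤ j' → j' + 1 < cs.length →
       (cs.getD (j' + 1) default).2.getD (2 * i) 0 =
         (cs.getD j' default).2.getD (2 * i) 0 + 1)

/-- Gödel encoding of the finite data presenting an laVASS. -/
def RawVASS.enc (V : RawVASS) : ℕ :=
  Encodable.encode (V.states, V.pairs, V.alpha, V.trans, V.init, V.finals)

namespace LV

/-- Threshold. -/
def thr (s : ℕ) : ℕ := 2 ^ s + 4
/-- Period. -/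
def per (s : ℕ) : ℕ := Nat.factorial (thr s)
/-- Number of classes. -/
def cls (s : ℕ) : ℕ := thr s + per s
/-- State growth. -/
def nxt (s : ℕ) : ℕ := s * (2 * (cls s * (cls s * cls s)))

lemma thr_ge (s : ℕ) : 4 ≤ thr s := Nat.le_add_left _ _
lemma per_pos (s : ℕ) : 0 < per s := Nat.factorial_pos _
lemma cls_pos (s : ℕ) : 0 < cls s := by have := per_pos s; unfold cls; omega

/-- Ultimately periodic congruence. -/
def Eqv (s x y : ℕ) : Prop := x = y ∨ (thr s ≤ x ∧ thr s ≤ y ∧ x ≡ y [MOD per s])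

lemma Eqv.rfl' {s x : ℕ} : Eqv s x x := Or.inl rfl
lemma Eqv.symm' {s x y : ℕ} (h : Eqv s x y) : Eqv s y x := by
  rcases h with h | ⟨a, b, c⟩
  · exact Or.inl h.symm
  · exact Or.inr ⟨b, a, c.symm⟩
lemma Eqv.trans' {s x y z : ℕ} (h : Eqv s x y) (h' : Eqv s y z) : Eqv s x z := by
  rcases h with rfl | ⟨a, b, c⟩
  · exact h'
  · rcases h' with rfl | ⟨a', b', c'⟩
    · exact Or.inr ⟨a, b, c⟩
    · exact Or.inr ⟨a, b', c.trans c'⟩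
lemma Eqv.add' {s x y x' y' : ℕ} (h : Eqv s x y) (h' : Eqv s x' y') :
    Eqv s (x + x') (y + y') := by
  rcases h with rfl | ⟨a, b, c⟩ <;> rcases h' with rfl | ⟨a', b', c'⟩
  · exact Or.inl rfl
  · exact Or.inr ⟨by omega, by omega, Nat.ModEq.add_left _ c'⟩
  · exact Or.inr ⟨by omega, by omega, Nat.ModEq.add_right _ c⟩
  · exact Or.inr ⟨by omega, by omega, c.add c'⟩

/-- Class representative. -/
def kap (s x : ℕ) : Fin (cls s) :=
  if h : x < thr s then ⟨x, by unfold cls; omega⟩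
  else ⟨thr s + (x - thr s) % per s, by
    have := Nat.mod_lt (x - thr s) (per_pos s)
    unfold cls; omega⟩

lemma kap_eqv (s x : ℕ) : Eqv s (kap s x).1 x := by
  unfold kap
  split_ifs with h
  · exact Or.inl rfl
  · refine Or.inr ⟨by simp, by omega, ?_⟩
    have : x = thr s + (x - thr s) := by omega
    conv_rhs => rw [this]
    exact Nat.ModEq.add_left _ (Nat.mod_modEq _ _)

lemma kap_congr {s x y : ℕ} (h : Eqv s x y) : kap s x = kap s y := by
  rcases h with rfl | ⟨a, b, c⟩
  · rfl
  · unfold kap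
    rw [dif_neg (by omega), dif_neg (by omega)]
    have : (x - thr s) ≡ (y - thr s) [MOD per s] := by
      apply Nat.ModEq.add_left_cancel' (thr s)
      rwa [Nat.add_sub_cancel' a, Nat.add_sub_cancel' b]
    simp only [Fin.mk.injEq]
    rw [this]

lemma kap_add {s x y : ℕ} : kap s ((kap s x).1 + (kap s y).1) = kap s (x + y) :=
  kap_congr ((kap_eqv s x).add' (kap_eqv s y))
lemma kap_add_r {s x y : ℕ} : kap s ((kap s x).1 + y) = kap s (x + y) :=
  kap_congr ((kap_eqv s x).add' Eqv.rfl')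

lemma kap_add_bit {s x y : ℕ} {b : Bool} :
    kap s ((kap s x).1 + b.toNat * (kap s y).1) = kap s (x + b.toNat * y) := by
  cases b
  · simpa using kap_add_r (s := s) (x := x) (y := 0)
  · simpa using kap_add

section rch
variable {σ A : Type}

/-- States reachable after `t` letters of `w`, from the set `Y`. -/
def Rch (δ : σ → A → σ → Prop) (w : ℕ → A) (Y : Set σ) : ℕ → Set σ
  | 0 => Y
  | t + 1 => {q' | ∃ q ∈ Rch δ w Y t, δ q (w t) q'}

lemma Rch_congr (δ : σ → A → σ → Prop) {w w' : ℕ → A} (Y : Set σ) (t : ℕ)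
    (h : ∀ u < t, w u = w' u) : Rch δ w Y t = Rch δ w' Y t := by
  induction t with
  | zero => rfl
  | succ t ih =>
    simp only [Rch]
    rw [ih (fun u hu => h u (by omega)), h t (by omega)]

lemma Rch_add (δ : σ → A → σ → Prop) (w : ℕ → A) (Y : Set σ) (n k : ℕ) :
    Rch δ w Y (n + k) = Rch δ (fun t => w (n + t)) (Rch δ w Y n) k := by
  induction k with
  | zero => rfl
  | succ k ih =>
    rw [← add_assoc]
    simp only [Rch]
    rw [ih]

lemma mem_Rch_iff (δ : σ → A → σ → Prop) (w : ℕ → A) (Y : Set σ) (k : ℕ) (q' : σ) :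
    q' ∈ Rch δ w Y k ↔ ∃ q ∈ Y, q' ∈ Rch δ w {q} k := by
  induction k generalizing q' with
  | zero => simp [Rch]
  | succ k ih =>
    simp only [Rch, Set.mem_ofPred_eq]
    constructor
    · rintro ⟨p, hp, hd⟩
      obtain ⟨q, hq, hp⟩ := (ih p).1 hp
      exact ⟨q, hq, p, hp, hd⟩
    · rintro ⟨q, hq, p, hp, hd⟩
      exact ⟨p, (ih p).2 ⟨q, hq, hp⟩, hd⟩

lemma Rch_period [Fintype σ] {s : ℕ} (hs : Fintype.card σ = s) (δ : σ → A → σ → Prop) (a : A)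
    (Y : Set σ) {x y : ℕ} (h : Eqv s x y) :
    Rch δ (fun _ => a) Y x = Rch δ (fun _ => a) Y y := by
  classical
  set u := Rch δ (fun _ => a) Y with hu
  have hstep : ∀ k l, u k = u l → u (k + 1) = u (l + 1) := by
    intro k l h
    simp only [hu, Rch]
    rw [← hu, h]
  have hadd : ∀ k l j, u k = u l → u (k + j) = u (l + j) := by
    intro k l j h
    induction j with
    | zero => exact h
    | succ j ih => exact hstep _ _ ih
  obtain ⟨i, j, hij, he⟩ : ∃ i j : Fin (2 ^ s + 1), i ≠ j ∧ u i = u j := by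
    apply Fintype.exists_ne_map_eq_of_card_lt (fun i : Fin (2 ^ s + 1) => u i)
    rw [Fintype.card_set, hs]; simp
  obtain ⟨i, j, hij, hj, he⟩ : ∃ i j : ℕ, i < j ∧ j ≤ 2 ^ s ∧ u i = u j := by
    rcases lt_or_gt_of_ne hij with h | h
    · exact ⟨i, j, h, by omega, he⟩
    · exact ⟨j, i, h, by omega, he.symm⟩
  have hper : ∀ k, i ≤ k → u (k + (j - i)) = u k := by
    intro k hk
    have := hadd i j (k - i) he
    rw [show i + (k - i) = k by omega] at this
    rw [this]; congr 1; omega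
  have hmul : ∀ c k, i ≤ k → u (k + (j - i) * c) = u k := by
    intro c
    induction c with
    | zero => intro k _; rfl
    | succ c ih =>
      intro k hk
      rw [mul_add, mul_one, ← add_assoc, hper _ (by omega), ih k hk]
  have hdvd : (j - i) ∣ per s := Nat.dvd_factorial (by omega) (by unfold thr; omega)
  have key : ∀ x y, x ≤ y → thr s ≤ x → x ≡ y [MOD per s] → u x = u y := by
    intro x y hxy hx hm
    obtain ⟨c, hc⟩ := hdvd.trans ((Nat.modEq_iff_dvd' hxy).1 hm)
    have : y = x + (j - i) * c := by omega
    rw [this, hmul c x (by unfold thr at hx; omega)]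
  rcases h with rfl | ⟨h1, h2, h3⟩
  · rfl
  · rcases le_total x y with h | h
    · exact key x y h h1 h3
    · exact (key y x h h2 h3.symm).symm

end rch

section core
variable {ι : Type} [DecidableEq ι]

abbrev Letter (ι : Type) := ι → Bool × Bool

/-- A finite automaton. -/
structure NA (ι σ : Type) where
  I : Set σ
  F : Set σ
  δ : σ → Letter ι → σ → Prop

/-- The infinite word of a tuple. -/
def word (m : ι → ℕ) (t : ℕ) : Letter ι := fun i => ((m i).testBit t, decide (t < m i))

/-- A solution. -/
def Sol {σ : Type} (A : NA ι σ) (m : ι → ℕ) (n : ℕ) : Prop :=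
  (∀ i, m i ≤ n) ∧ ∃ q ∈ Rch A.δ (word m) A.I n, q ∈ A.F

/-- zero letter -/
def L0 : Letter ι := fun _ => (false, false)
/-- letter with only the unary track of `i` on. -/
def L1 (i : ι) : Letter ι := Function.update L0 i (false, true)

lemma testBit_false_of_le {x t : ℕ} (h : x ≤ t) : x.testBit t = false :=
  Nat.testBit_lt_two_pow (lt_of_le_of_lt h Nat.lt_two_pow_self)

set_option linter.unusedSectionVars false
lemma word_zero {m : ι → ℕ} {t : ℕ} (h : ∀ i, m i ≤ t) : word m t = L0 := by
  funext k
  simp [word, L0, testBit_false_of_le (h k), h k]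

lemma word_one {m : ι → ℕ} {t M : ℕ} {i : ι} (h : ∀ k, m k ≤ t) (hM : t < M) (hM2 : M < 2 ^ t) :
    word (Function.update m i M) t = L1 i := by
  funext k
  by_cases hk : k = i
  · subst hk; simp [word, L1, hM, Nat.testBit_lt_two_pow hM2]
  · simp [word, L1, L0, hk, testBit_false_of_le (h k), h k]

lemma Rch_tail {σ : Type} (A : NA ι σ) {m : ι → ℕ} {b : ℕ} (h : ∀ i, m i ≤ b) (k : ℕ) :
    Rch A.δ (word m) A.I (b + k) = Rch A.δ (fun _ => L0) (Rch A.δ (word m) A.I b) k := by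
  rw [Rch_add]
  apply Rch_congr
  intro u _
  exact word_zero (fun i => (h i).trans (by omega))

lemma shrink {σ : Type} [Fintype σ] (A : NA ι σ) {s : ℕ} (hs : Fintype.card σ = s)
    {m : ι → ℕ} {n b : ℕ} (h : Sol A m n) (hb : ∀ i, m i ≤ b) (hn : b ≤ n) :
    ∃ n' ≤ b + cls s, Sol A m n' := by
  refine ⟨b + (kap s (n - b)).1, by have := (kap s (n - b)).2; omega,
    fun i => (hb i).trans (by omega), ?_⟩
  obtain ⟨q, hq, hF⟩ := h.2
  refine ⟨q, ?_, hF⟩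
  rw [Rch_tail A hb, Rch_period hs _ _ _ (kap_eqv s (n - b)), ← Rch_tail A hb,
    Nat.add_sub_cancel' hn]
  exact hq

abbrev St (σ : Type) (s : ℕ) := σ × (Bool × (Fin (cls s) × (Fin (cls s) × Fin (cls s))))

/-- From `q`, read `g` letters `L1 i`, then zero letters, to reach a final state. -/
def Fin1 {σ : Type} (A : NA ι σ) (i : ι) (q : σ) (g : ℕ) : Prop :=
  ∃ x, ∃ q' ∈ Rch A.δ (fun _ => L0) (Rch A.δ (fun _ => L1 i) {q} g) x, q' ∈ A.F

lemma Fin1_congr {σ : Type} [Fintype σ] {s : ℕ} (hs : Fintype.card σ = s) (A : NA ι σ) (i : ι)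
    (q : σ) {g g' : ℕ} (h : Eqv s g g') : Fin1 A i q g ↔ Fin1 A i q g' := by
  unfold Fin1
  rw [Rch_period hs _ _ _ h]

/-- letters with guessed bits of `M`. -/
def gw (m : ι → ℕ) (i : ι) (M : ℕ) (t : ℕ) : Letter ι :=
  Function.update (word m t) i (M.testBit t, true)

lemma word_gw {m : ι → ℕ} {i : ι} {M t : ℕ} (h : t < M) :
    word (Function.update m i M) t = gw m i M t := by
  funext k
  by_cases hk : k = i
  · subst hk; simp [word, gw, h]
  · simp [word, gw, hk]

lemma gw_upd {m : ι → ℕ} {i : ι} {M t : ℕ} :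
    gw (Function.update m i 0) i M t = gw m i M t := by
  funext k
  by_cases hk : k = i
  · subst hk; simp [gw]
  · simp [word, gw, hk]

/-- assembling a solution from the run up to `n`, and back -/
lemma assemble {σ : Type} (A : NA ι σ) {m : ι → ℕ} {i : ι} {M n : ℕ}
    (hm : ∀ k, m k ≤ n) (hM : n ≤ M) (hM2 : M < 2 ^ n) {q : σ}
    (hq : q ∈ Rch A.δ (gw m i M) A.I n) (hF : Fin1 A i q (M - n)) :
    ∃ n', M ≤ n' ∧ Sol A (Function.update m i M) n' := by
  obtain ⟨x, q', hq', hF⟩ := hF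
  have hle : ∀ k, (Function.update m i M) k ≤ M := by
    intro k
    by_cases hk : k = i
    · subst hk; simp
    · simp [hk]; exact (hm k).trans hM
  refine ⟨M + x, by omega, fun k => (hle k).trans (by omega), q', ?_, hF⟩
  rw [Rch_tail A hle, mem_Rch_iff]
  obtain ⟨p, hp, hq'⟩ := (mem_Rch_iff _ _ _ _ _).1 hq'
  refine ⟨p, ?_, hq'⟩
  rw [show M = n + (M - n) by omega, Rch_add, mem_Rch_iff]
  refine ⟨q, ?_, ?_⟩
  · rw [← show M = n + (M - n) by omega]
    rw [Rch_congr A.δ A.I n (fun u hu => word_gw (m := m) (i := i) (M := M) (by omega))]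
    exact hq
  · rw [← show M = n + (M - n) by omega]
    rw [Rch_congr A.δ (w' := fun _ => L1 i) {q} (M - n)]
    · exact hp
    · intro u hu
      exact word_one (fun k => (hm k).trans (by omega)) (by omega)
        (lt_of_lt_of_le hM2 (Nat.pow_le_pow_right (by omega) (by omega)))

lemma disassemble {σ : Type} (A : NA ι σ) {m : ι → ℕ} {i : ι} {n N : ℕ}
    (h : Sol A m N) (hm : ∀ k, k ≠ i → m k ≤ n) (hM : n ≤ m i) (hM2 : m i < 2 ^ n) :
    ∃ q ∈ Rch A.δ (gw m i (m i)) A.I n, Fin1 A i q (m i - n) := by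
  have hle : ∀ k, m k ≤ m i := by
    intro k
    by_cases hk : k = i
    · subst hk; simp
    · exact (hm k hk).trans hM
  obtain ⟨hN, q', hq', hF⟩ := h
  have hNi := hN i
  rw [show N = m i + (N - m i) by omega, Rch_tail A hle, mem_Rch_iff] at hq'
  obtain ⟨p, hp, hq'⟩ := hq'
  rw [show m i = n + (m i - n) by omega, Rch_add, mem_Rch_iff] at hp
  obtain ⟨q, hq, hp⟩ := hp
  have e : m = Function.update (Function.update m i 0) i (m i) := by simp
  refine ⟨q, ?_, N - m i, q', ?_, hF⟩
  · rw [Rch_congr A.δ (w' := word m) A.I n]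
    · exact hq
    · intro u hu
      rw [← word_gw (by omega)]; simp
  · rw [mem_Rch_iff]
    refine ⟨p, ?_, hq'⟩
    rw [Rch_congr A.δ (w' := fun t => word m (n + t)) {q} (m i - n)]
    · exact hp
    · intro u hu
      show _ = word m (n + u)
      rw [e]
      refine (word_one ?_ (by omega) ?_).symm
      · intro k
        by_cases hk : k = i
        · subst hk; simp
        · simp [hk]; exact (hm k hk).trans (by omega)
      · exact lt_of_lt_of_le hM2 (Nat.pow_le_pow_right (by omega) (by omega))

lemma mod_succ (M t : ℕ) : M % 2 ^ (t + 1) = M % 2 ^ t + (M.testBit t).toNat * 2 ^ t := by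
  rw [pow_succ, Nat.mod_mul, Nat.testBit_eq_decide_div_mod_eq]
  have : M / 2 ^ t % 2 = (decide (M / 2 ^ t % 2 = 1)).toNat := by
    rcases Nat.mod_two_eq_zero_or_one (M / 2 ^ t) with h | h <;> simp [h]
  rw [← this]; ring

lemma ext_bit {M t : ℕ} (h : M < 2 ^ t) (b : Bool) :
    M + b.toNat * 2 ^ t < 2 ^ (t + 1) ∧ (M + b.toNat * 2 ^ t).testBit t = b ∧
      ∀ u < t, (M + b.toNat * 2 ^ t).testBit u = M.testBit u := by
  cases b
  · simp [pow_succ, Nat.testBit_lt_two_pow h]; omega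
  · simp only [Bool.toNat_true, one_mul]
    refine ⟨by rw [pow_succ]; omega, ?_, ?_⟩
    · rw [add_comm, Nat.testBit_two_pow_add_eq, Nat.testBit_lt_two_pow h]; rfl
    · intro u hu
      rw [add_comm, Nat.testBit_two_pow_add_gt hu]

/-- mode `j` automaton: the cut is at `m j`, the bits of `e = M - m j` are guessed. -/
def A1 {σ : Type} (A : NA ι σ) (s : ℕ) (i j : ι) : NA ι (St σ s) where
  I := {x | x.1 ∈ A.I ∧ x.2.1 = false ∧ x.2.2.2.1 = kap s 1 ∧ x.2.2.2.2 = kap s 0}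
  F := {x | x.2.1 = false ∧ Fin1 A i x.1 x.2.2.2.2.1}
  δ := fun x l y => (l j).2 = true ∧ ∃ b β : Bool,
    y.2.2.2.1 = kap s (x.2.2.2.1.1 + x.2.2.2.1.1) ∧
    y.2.2.2.2 = kap s (x.2.2.2.2.1 + b.toNat * x.2.2.2.1.1) ∧
    b.toNat + (l j).1.toNat + x.2.1.toNat = β.toNat + 2 * y.2.1.toNat ∧
    A.δ x.1 (Function.update l i (β, true)) y.1

lemma A1_sound {σ : Type} (A : NA ι σ) (s : ℕ) (i j : ι) (m : ι → ℕ) (t : ℕ) (x : St σ s)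
    (hx : x ∈ Rch (A1 A s i j).δ (word m) (A1 A s i j).I t) :
    ∃ M E, M < 2 ^ t ∧ x.2.2.2.1 = kap s (2 ^ t) ∧ x.2.2.2.2 = kap s E ∧
      E + m j % 2 ^ t = M + x.2.1.toNat * 2 ^ t ∧
      x.1 ∈ Rch A.δ (gw m i M) A.I t ∧ t ≤ m j := by
  induction t generalizing x with
  | zero =>
    obtain ⟨h1, h2, h3, h4⟩ := hx
    exact ⟨0, 0, by simp, by simpa using h3, h4, by simp [h2, Nat.mod_one], h1, by omega⟩
  | succ t ih =>
    obtain ⟨x0, hx0, h1, b, β, h2, h3, h4, h5⟩ := hx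
    obtain ⟨M, E, i1, i2, i3, i4, i5, i6⟩ := ih x0 hx0
    obtain ⟨e1, e2, e3⟩ := ext_bit i1 β
    refine ⟨M + β.toNat * 2 ^ t, E + b.toNat * 2 ^ t, e1, ?_, ?_, ?_, ?_, ?_⟩
    · rw [h2, i2, kap_add]; congr 1; ring
    · rw [h3, i3, i2, kap_add_bit]
    · rw [mod_succ]
      simp only [word] at h4
      have := congrArg (· * 2 ^ t) h4
      simp only [add_mul] at this
      rw [pow_succ]
      nlinarith
    · refine ⟨x0.1, ?_, ?_⟩
      · rw [Rch_congr A.δ (w' := gw m i M) A.I t]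
        · exact i5
        · intro u hu
          simp only [gw]; rw [e3 u hu]
      · simp only [gw]; rw [e2]; exact h5
    · simp only [word, decide_eq_true_eq] at h1; omega

lemma A1_complete {σ : Type} (A : NA ι σ) (s : ℕ) (i j : ι) (m : ι → ℕ) (M E : ℕ) (t : ℕ)
    (hE : M = E + m j)
    (ht : t ≤ m j) (q : σ) (hq : q ∈ Rch A.δ (gw m i M) A.I t) :
    ∃ cr : Bool, (E % 2 ^ t + m j % 2 ^ t = M % 2 ^ t + cr.toNat * 2 ^ t) ∧
    (q, cr, kap s 0, kap s (2 ^ t), kap s (E % 2 ^ t)) ∈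
      Rch (A1 A s i j).δ (word m) (A1 A s i j).I t := by
  induction t generalizing q with
  | zero =>
    exact ⟨false, by simp [Nat.mod_one], hq, rfl, by simp, by simp [Nat.mod_one]⟩
  | succ t ih =>
    obtain ⟨q0, hq0, hd⟩ := hq
    obtain ⟨cr, h1, h2⟩ := ih (by omega) q0 hq0
    have ex : ∃ cr' : Bool, (E.testBit t).toNat + ((m j).testBit t).toNat + cr.toNat =
        (M.testBit t).toNat + 2 * cr'.toNat := by
      have hb : (E % 2 ^ (t+1) + m j % 2 ^ (t+1)) % 2 ^ (t+1) = M % 2 ^ (t+1) := by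
        rw [← Nat.add_mod, hE]
      rw [mod_succ E, mod_succ (m j), mod_succ M] at hb
      have hp : 0 < 2 ^ t := by positivity
      have hb2 : E % 2 ^ t + (E.testBit t).toNat * 2 ^ t + (m j % 2 ^ t +
          ((m j).testBit t).toNat * 2 ^ t) =
          M % 2 ^ t + 2 ^ t * ((E.testBit t).toNat + ((m j).testBit t).toNat + cr.toNat) := by
        nlinarith
      rw [hb2, pow_succ, Nat.mod_mul (x := _ + _ * _)] at hb
      have hlt : M % 2 ^ t < 2 ^ t := Nat.mod_lt _ hp
      rw [Nat.add_mul_mod_self_left, Nat.mod_mod, Nat.add_mul_div_left _ _ hp,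
        Nat.div_eq_of_lt hlt, zero_add] at hb
      have hb3 : ((E.testBit t).toNat + ((m j).testBit t).toNat + cr.toNat) % 2
          = (M.testBit t).toNat := by
        have : 2 ^ t * (((E.testBit t).toNat + ((m j).testBit t).toNat + cr.toNat) % 2)
          = 2 ^ t * (M.testBit t).toNat := by linarith
        exact Nat.eq_of_mul_eq_mul_left hp this
      revert hb3
      cases E.testBit t <;> cases (m j).testBit t <;> cases cr <;> cases M.testBit t <;> simp
    obtain ⟨cr', hcr⟩ := ex
    refine ⟨cr', ?_, ?_⟩
    · rw [mod_succ, mod_succ, mod_succ, pow_succ]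
      have := congrArg (· * 2 ^ t) hcr
      simp only [add_mul] at this
      nlinarith
    · refine ⟨_, h2, ?_, E.testBit t, M.testBit t, ?_, ?_, ?_, ?_⟩
      · simp [word]; omega
      · simp only [kap_add]; congr 1; ring
      · simp only [kap_add_bit]; rw [mod_succ]
      · simpa [word] using hcr
      · exact hd

/-- mode K automaton: the cut is at the bit length of `M`. -/
def A2 {σ : Type} (A : NA ι σ) (s : ℕ) (i : ι) : NA ι (St σ s) where
  I := {x | x.1 ∈ A.I ∧ x.2.1 = false ∧ x.2.2.1 = kap s 0 ∧ x.2.2.2.1 = kap s 1 ∧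
    x.2.2.2.2 = kap s 0}
  F := {x | x.2.1 = true ∧ thr s ≤ x.2.2.1.1 ∧
    ∃ g, thr s ≤ g ∧ g + x.2.2.1.1 ≡ x.2.2.2.2.1 [MOD per s] ∧ Fin1 A i x.1 g}
  δ := fun x l y =>
    y.2.2.1 = kap s (x.2.2.1.1 + 1) ∧
    y.2.2.2.1 = kap s (x.2.2.2.1.1 + x.2.2.2.1.1) ∧
    y.2.2.2.2 = kap s (x.2.2.2.2.1 + y.2.1.toNat * x.2.2.2.1.1) ∧
    A.δ x.1 (Function.update l i (y.2.1, true)) y.1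

lemma A2_sound {σ : Type} (A : NA ι σ) (s : ℕ) (i : ι) (m : ι → ℕ) (t : ℕ) (x : St σ s)
    (hx : x ∈ Rch (A2 A s i).δ (word m) (A2 A s i).I t) :
    ∃ M, M < 2 ^ t ∧ x.2.2.1 = kap s t ∧ x.2.2.2.1 = kap s (2 ^ t) ∧ x.2.2.2.2 = kap s M ∧
      (x.2.1 = true → 2 ^ t ≤ 2 * M) ∧
      x.1 ∈ Rch A.δ (gw m i M) A.I t := by
  induction t generalizing x with
  | zero =>
    obtain ⟨h1, h2, h3, h4, h5⟩ := hx
    exact ⟨0, by simp, h3, by simpa using h4, h5, by simp [h2], h1⟩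
  | succ t ih =>
    obtain ⟨x0, hx0, h1, h2, h3, h4⟩ := hx
    obtain ⟨M, i1, i2, i3, i4, i5, i6⟩ := ih x0 hx0
    obtain ⟨e1, e2, e3⟩ := ext_bit i1 x.2.1
    refine ⟨M + x.2.1.toNat * 2 ^ t, e1, ?_, ?_, ?_, ?_, ?_⟩
    · rw [h1, i2, kap_add_r]
    · rw [h2, i3, kap_add]; congr 1; ring
    · rw [h3, i3, i4, kap_add_bit]
    · intro h; rw [h, pow_succ]; simp; omega
    · refine ⟨x0.1, ?_, ?_⟩
      · rw [Rch_congr A.δ (w' := gw m i M) A.I t]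
        · exact i6
        · intro u hu
          simp only [gw]; rw [e3 u hu]
      · simp only [gw]; rw [e2]; exact h4

lemma A2_complete {σ : Type} (A : NA ι σ) (s : ℕ) (i : ι) (m : ι → ℕ) (M : ℕ) (t : ℕ)
    (q : σ) (hq : q ∈ Rch A.δ (gw m i M) A.I t) :
    ∃ cr : Bool, (0 < t → cr = M.testBit (t - 1)) ∧
    (q, cr, kap s t, kap s (2 ^ t), kap s (M % 2 ^ t)) ∈
      Rch (A2 A s i).δ (word m) (A2 A s i).I t := by
  induction t generalizing q with
  | zero =>
    exact ⟨false, by simp, hq, rfl, rfl, by simp, by simp [Nat.mod_one]⟩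
  | succ t ih =>
    obtain ⟨q0, hq0, hd⟩ := hq
    obtain ⟨cr, h1, h2⟩ := ih q0 hq0
    refine ⟨M.testBit t, by simp, _, h2, ?_, ?_, ?_, ?_⟩
    · simp only [kap_add_r]
    · simp only [kap_add]; congr 1; ring
    · simp only [kap_add_bit]; rw [mod_succ]
    · exact hd

/-- the bound predicate -/
def Bd (k s b : ℕ) : Prop :=
  ∀ (ι : Type) (_ : DecidableEq ι) (σ : Type) (_ : Fintype σ) (A : NA ι σ) (S : Finset ι),
    Fintype.card σ = s → S.card = k →
    (∃ m n, (∀ i, i ∉ S → m i = 0) ∧ Sol A m n) →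
    ∃ m n, (∀ i, i ∉ S → m i = 0) ∧ Sol A m n ∧ n ≤ b

lemma Bd_zero (s : ℕ) : Bd 0 s (cls s) := by
  intro ι _ σ _ A S hs hS ⟨m, n, hm, h⟩
  have hS : S = ∅ := Finset.card_eq_zero.1 hS
  subst hS
  obtain ⟨n', hn', h'⟩ := shrink A hs h (b := 0) (fun i => by simp [hm i]) (by omega)
  exact ⟨m, n', hm, h', by omega⟩

lemma pow_big (n : ℕ) (h : 4 ≤ n) : 4 * n ≤ 2 ^ n := by
  induction n, h using Nat.le_induction with
  | base => norm_num
  | succ n hn ih => rw [pow_succ]; omega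

lemma A1_back {σ : Type} [Fintype σ] {s : ℕ} (hs : Fintype.card σ = s) (A : NA ι σ) (i j : ι)
    {m : ι → ℕ} {n : ℕ} (h : Sol (A1 A s i j) m n) :
    ∃ M n', M < 2 ^ n ∧ M ≤ n' ∧ n ≤ M ∧ Sol A (Function.update m i M) n' := by
  obtain ⟨hm, x, hx, hF⟩ := h
  obtain ⟨M, E, h1, h2, h3, h4, h5, h6⟩ := A1_sound A s i j m n x hx
  obtain ⟨f1, f2⟩ := hF
  have hmj : m j = n := le_antisymm (hm j) h6
  rw [f1, hmj, Nat.mod_eq_of_lt Nat.lt_two_pow_self] at h4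
  simp at h4
  rw [h3, Fin1_congr hs A i _ (kap_eqv s E)] at f2
  obtain ⟨n', a, b⟩ := assemble A hm (by omega) h1 h5 (by rwa [← h4, Nat.add_sub_cancel])
  exact ⟨M, n', h1, a, by omega, b⟩

lemma A2_back {σ : Type} [Fintype σ] {s : ℕ} (hs : Fintype.card σ = s) (A : NA ι σ) (i : ι)
    {m : ι → ℕ} {n : ℕ} (h : Sol (A2 A s i) m n) :
    ∃ M n', M < 2 ^ n ∧ M ≤ n' ∧ n ≤ M ∧ Sol A (Function.update m i M) n' := by
  obtain ⟨hm, x, hx, hF⟩ := h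
  obtain ⟨M, h1, h2, h3, h4, h5, h6⟩ := A2_sound A s i m n x hx
  obtain ⟨f1, f2, g, f3, f4, f5⟩ := hF
  have h5 := h5 f1
  have hn : thr s ≤ n := by
    rw [h2] at f2
    rcases kap_eqv s n with h | h
    · omega
    · exact h.2.1
  have hmod : ∀ y, (kap s y).1 ≡ y [MOD per s] := by
    intro y
    rcases kap_eqv s y with h | h
    · rw [h]
    · exact h.2.2
  have h4n : 4 ≤ n := by have := thr_ge s; omega
  have := pow_big n h4n
  have hge : thr s ≤ M - n := by omega
  rw [h2, h4] at f4
  have f6 : g + n ≡ (M - n) + n [MOD per s] := by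
    rw [Nat.sub_add_cancel (by omega)]
    exact ((Nat.ModEq.add_left g (hmod n)).symm.trans f4).trans (hmod M)
  have f7 : Eqv s g (M - n) := Or.inr ⟨f3, hge, Nat.ModEq.add_right_cancel' n f6⟩
  rw [Fin1_congr hs A i _ f7] at f5
  obtain ⟨n', a, b⟩ := assemble A hm (by omega) h1 h6 f5
  exact ⟨M, n', h1, a, by omega, b⟩

lemma Bd_succ (k s b : ℕ) (hb : Bd k (nxt s) b) : Bd (k + 1) s (2 ^ (b + thr s) + cls s) := by
  intro ι _ σ _ A S hs hS ⟨m, n, hm, h⟩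
  have hcard : Fintype.card (St σ s) = nxt s := by
    simp [St, nxt, hs]
  obtain ⟨i, hiS, hi⟩ := S.exists_max_image m (Finset.card_pos.1 (by omega))
  have hi' : ∀ k, m k ≤ m i := by
    intro k
    by_cases hk : k ∈ S
    · exact hi k hk
    · simp [hm k hk]
  have hSe : (S.erase i).card = k := by rw [Finset.card_erase_of_mem hiS]; omega
  have hsupp : ∀ k, k ∉ S.erase i → Function.update m i 0 k = 0 := by
    intro k hk
    by_cases hki : k = i
    · subst hki; simp
    · simp only [Function.update_of_ne hki]
      exact hm k (fun h => hk (Finset.mem_erase.2 ⟨hki, h⟩))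
  -- finishing
  have fin : ∀ (m' : ι → ℕ) (n' M n'' : ℕ), n' ≤ b → (∀ k, k ∉ S.erase i → m' k = 0) →
      (∀ k, m' k ≤ n') →
      M < 2 ^ n' → M ≤ n'' → n' ≤ M → Sol A (Function.update m' i M) n'' →
      ∃ m n, (∀ i, i ∉ S → m i = 0) ∧ Sol A m n ∧ n ≤ 2 ^ (b + thr s) + cls s := by
    intro m' n' M n'' hn' hm' hle hM hMn hnM hsol
    have hle' : ∀ k, Function.update m' i M k ≤ M := by
      intro k
      by_cases hk : k = i
      · subst hk; simp
      · simp [hk]; exact (hle k).trans hnM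
    obtain ⟨N, hN, hs'⟩ := shrink A hs hsol hle' hMn
    refine ⟨_, N, ?_, hs', ?_⟩
    · intro k hk
      have hki : k ≠ i := fun h => hk (h ▸ hiS)
      rw [Function.update_of_ne hki]
      exact hm' k (fun h => hk (Finset.mem_of_mem_erase h))
    · have : 2 ^ n' ≤ 2 ^ (b + thr s) := Nat.pow_le_pow_right (by omega) (by omega)
      omega
  by_cases hc : ∀ k, k ≠ i → m k ≤ (m i).size
  · by_cases hT : (m i).size < thr s
    · obtain ⟨N, hN, hs'⟩ := shrink A hs h hi' (h.1 i)
      refine ⟨m, N, hm, hs', ?_⟩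
      have h1 : m i < 2 ^ (m i).size := Nat.lt_size_self _
      have : 2 ^ (m i).size ≤ 2 ^ (b + thr s) := Nat.pow_le_pow_right (by omega) (by omega)
      omega
    · have hpos : 0 < (m i).size := by have := thr_ge s; omega
      have h1 : m i < 2 ^ (m i).size := Nat.lt_size_self _
      have h2 : 2 ^ ((m i).size - 1) ≤ m i := Nat.lt_size.1 (by omega)
      have h3 : 4 * (m i).size ≤ 2 ^ (m i).size := pow_big _ (by have := thr_ge s; omega)
      have h4 : 2 ^ (m i).size = 2 ^ ((m i).size - 1) * 2 := by
        rw [← pow_succ]; congr 1; omega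
      obtain ⟨q, hq, hF⟩ := disassemble A h hc (by omega) h1
      rw [Rch_congr A.δ A.I _ (fun u _ => (gw_upd (m := m) (i := i) (M := m i) (t := u)).symm)]
        at hq
      obtain ⟨cr, c1, c2⟩ := A2_complete A s i (Function.update m i 0) (m i) _ q hq
      have hcr : cr = true := by
        rw [c1 hpos]
        apply Nat.testBit_of_two_pow_le_and_two_pow_add_one_gt h2
        rw [pow_succ]; omega
      obtain ⟨m', n', hm', hsol, hn'⟩ := hb ι inferInstance (St σ s) inferInstance (A2 A s i) (S.erase i) hcard hSe
        ⟨Function.update m i 0, (m i).size, hsupp, by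
          intro k
          by_cases hk : k = i
          · subst hk; simp
          · simp [hk]; exact hc k hk, _, c2, hcr, by
          have := kap_eqv s (m i).size
          rcases this with h | h
          · simp only [h]; omega
          · exact h.1, m i - (m i).size, by omega, by
          have hmod : ∀ y, (kap s y).1 ≡ y [MOD per s] := by
            intro y
            rcases kap_eqv s y with h | h
            · rw [h]
            · exact h.2.2
          simp only
          refine (Nat.ModEq.add_left _ (hmod _)).trans ?_
          rw [Nat.sub_add_cancel (by omega)]
          refine Nat.ModEq.trans ?_ (hmod _).symm
          rw [Nat.mod_eq_of_lt h1], hF⟩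
      obtain ⟨M, n'', b1, b2, b3, b4⟩ := A2_back hs A i hsol
      exact fin m' n' M n'' hn' hm' hsol.1 b1 b2 b3 b4
  · push Not at hc
    obtain ⟨k0, hk0, hk0'⟩ := hc
    have hk0S : k0 ∈ S.erase i := by
      refine Finset.mem_erase.2 ⟨hk0, ?_⟩
      by_contra hh
      rw [hm k0 hh] at hk0'; omega
    obtain ⟨j, hjS, hj⟩ := (S.erase i).exists_max_image m ⟨k0, hk0S⟩
    have hji : j ≠ i := Finset.ne_of_mem_erase hjS
    have hj' : ∀ k, k ≠ i → m k ≤ m j := by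
      intro k hk
      by_cases hkS : k ∈ S
      · exact hj k (Finset.mem_erase.2 ⟨hk, hkS⟩)
      · simp [hm k hkS]
    have hM2 : m i < 2 ^ m j := (Nat.lt_size_self _).trans_le
      (Nat.pow_le_pow_right (by omega) ((le_of_lt hk0').trans (hj' k0 hk0)))
    obtain ⟨q, hq, hF⟩ := disassemble A h hj' (hi' j) hM2
    rw [Rch_congr A.δ A.I _ (fun u _ => (gw_upd (m := m) (i := i) (M := m i) (t := u)).symm)]
        at hq
    have hmj : Function.update m i 0 j = m j := by simp [hji]
    obtain ⟨cr, c1, c2⟩ := A1_complete A s i j (Function.update m i 0) (m i) (m i - m j) (m j)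
      (by rw [hmj]; have := hi' j; omega) (by rw [hmj]) q hq
    rw [hmj, Nat.mod_eq_of_lt (show m i - m j < 2 ^ m j by omega),
      Nat.mod_eq_of_lt Nat.lt_two_pow_self, Nat.mod_eq_of_lt hM2] at c1
    rw [Nat.mod_eq_of_lt (show m i - m j < 2 ^ m j by omega)] at c2
    have hcr : cr = false := by
      have := hi' j
      cases cr
      · rfl
      · simp at c1; omega
    obtain ⟨m', n', hm', hsol, hn'⟩ := hb ι inferInstance (St σ s) inferInstance (A1 A s i j) (S.erase i) hcard hSe
        ⟨Function.update m i 0, m j, hsupp, by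
          intro k
          by_cases hk : k = i
          · subst hk; simp
          · simp [hk]; exact hj' k hk, _, c2, hcr, (Fin1_congr hs A i _ (kap_eqv s _)).2 hF⟩
    obtain ⟨M, n'', b1, b2, b3, b4⟩ := A1_back hs A i j hsol
    exact fin m' n' M n'' hn' hm' hsol.1 b1 b2 b3 b4

end core

/-- iterated state growth -/
def ss (s k : ℕ) : ℕ := nxt^[k] s

/-- the bound at level `r` of `K` -/
def fb (s K r : ℕ) : ℕ :=
  Nat.rec (cls (ss s K)) (fun r v => 2 ^ (v + thr (ss s (K - (r + 1)))) + cls (ss s (K - (r + 1)))) r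

lemma fb_succ (s K r : ℕ) : fb s K (r + 1) =
    2 ^ (fb s K r + thr (ss s (K - (r + 1)))) + cls (ss s (K - (r + 1))) := rfl

lemma Bd_fb (s K r : ℕ) (h : r ≤ K) : Bd r (ss s (K - r)) (fb s K r) := by
  induction r with
  | zero => exact Bd_zero _
  | succ r ih =>
    have := ih (by omega)
    rw [fb_succ]
    refine Bd_succ r _ _ ?_
    convert this using 1
    unfold ss
    rw [← Function.iterate_succ_apply' nxt]
    congr 1; omega

lemma Bd_main (s K : ℕ) : Bd K s (fb s K K) := by
  simpa [ss] using Bd_fb s K K le_rfl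

end LV
namespace LV

lemma seq_lemma (X : ℕ → ℕ) (n : ℕ) (h0 : X 0 = 0)
    (h1 : ∀ k < n, X (k + 1) = X k ∨ X (k + 1) = X k + 1)
    (h2 : ∀ k < n, X (k + 1) = X k + 1 → ∀ k', k ≤ k' → k' < n → X (k' + 1) = X k' + 1)
    (k : ℕ) (hk : k ≤ n) : X k = X n - (n - k) := by
  by_cases hc : ∃ j < k, X (j + 1) = X j + 1
  · obtain ⟨j, hj, hj'⟩ := hc
    have key : ∀ l, k + l ≤ n → X (k + l) = X k + l := by
      intro l
      induction l with
      | zero => intro _; rfl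
      | succ l ih =>
        intro hl
        have := h2 j (by omega) hj' (k + l) (by omega) (by omega)
        rw [← add_assoc, this, ih (by omega)]; rfl
    have := key (n - k) (by omega)
    rw [Nat.add_sub_cancel' hk] at this
    omega
  · push Not at hc
    have z : ∀ l, l ≤ k → X l = 0 := by
      intro l
      induction l with
      | zero => intro _; exact h0
      | succ l ih =>
        intro hl
        rcases h1 l (by omega) with h | h
        · rw [h, ih (by omega)]
        · exact absurd h (hc l (by omega))
    have up : ∀ l, k + l ≤ n → X (k + l) ≤ l := by
      intro l
      induction l with
      | zero => intro _; simp [z k le_rfl]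
      | succ l ih =>
        intro hl
        have := ih (by omega)
        rcases h1 (k + l) (by omega) with h | h <;> rw [← add_assoc] <;> omega
    have := up (n - k) (by omega)
    rw [Nat.add_sub_cancel' hk] at this
    rw [z k le_rfl]; omega

lemma mem_le_encode {α : Type} [Encodable α] (l : List α) (a : α) (h : a ∈ l) :
    Encodable.encode a ≤ Encodable.encode l := by
  induction l with
  | nil => simp at h
  | cons b l ih =>
    rw [Encodable.encode_list_cons]
    rcases List.mem_cons.1 h with rfl | h
    · exact (Nat.left_le_pair _ _).trans (Nat.le_succ _)
    · exact ((ih h).trans (Nat.right_le_pair _ _)).trans (Nat.le_succ _)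

lemma trans_le (V : RawVASS) {q a q' : ℕ} {u : List (ℤ × ℤ)} (h : (q, a, q', u) ∈ V.trans) :
    q ≤ V.enc ∧ q' ≤ V.enc := by
  have h1 := mem_le_encode _ _ h
  have h2 : Encodable.encode V.trans ≤ V.enc := by
    unfold RawVASS.enc
    simp only [Encodable.encode_prod_val]
    refine le_trans ?_ (Nat.right_le_pair _ _)
    refine le_trans ?_ (Nat.right_le_pair _ _)
    refine le_trans ?_ (Nat.right_le_pair _ _)
    exact Nat.left_le_pair _ _
  simp only [Encodable.encode_prod_val, Encodable.encode_nat] at h1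
  constructor
  · exact (Nat.left_le_pair _ _).trans (h1.trans h2)
  · refine le_trans ?_ (h1.trans h2)
    refine le_trans ?_ (Nat.right_le_pair _ _)
    refine le_trans ?_ (Nat.right_le_pair _ _)
    exact Nat.left_le_pair _ _

lemma init_le (V : RawVASS) : V.init ≤ V.enc := by
  unfold RawVASS.enc
  simp only [Encodable.encode_prod_val]
  refine le_trans ?_ (Nat.right_le_pair _ _)
  refine le_trans ?_ (Nat.right_le_pair _ _)
  refine le_trans ?_ (Nat.right_le_pair _ _)
  refine le_trans ?_ (Nat.right_le_pair _ _)
  exact Nat.left_le_pair _ _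

/-- The backward automaton of `V`. -/
def AV (V : RawVASS) : NA (Fin V.pairs) (Fin (V.enc + 1)) where
  I := {q | q.1 ∈ V.finals}
  F := {q | q.1 = V.init}
  δ := fun q l q' => ∃ a < V.alpha, ∃ u, (q'.1, a, q.1, u) ∈ V.trans ∧ ∀ i : Fin V.pairs,
    u.getD (2 * i.1) ((1 : ℤ), (0 : ℤ)) = (1, ((l i).2.toNat : ℤ)) ∧
    u.getD (2 * i.1 + 1) ((1 : ℤ), (0 : ℤ)) = (2, ((l i).1.toNat : ℤ))

/-- counters with `r` steps remaining -/
def cfg {p : ℕ} (m : Fin p → ℕ) (r : ℕ) : List ℕ :=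
  List.ofFn (n := 2 * p) (fun j => if j.1 % 2 = 0 then m ⟨j.1 / 2, by omega⟩ - r
    else m ⟨j.1 / 2, by omega⟩ / 2 ^ r)

lemma cfg_even {p : ℕ} (m : Fin p → ℕ) (r : ℕ) (i : Fin p) :
    (cfg m r).getD (2 * i.1) 0 = m i - r := by
  have : 2 * i.1 < (cfg m r).length := by simp [cfg]
  rw [List.getD_eq_getElem _ _ this]
  simp [cfg]

lemma cfg_odd {p : ℕ} (m : Fin p → ℕ) (r : ℕ) (i : Fin p) :
    (cfg m r).getD (2 * i.1 + 1) 0 = m i / 2 ^ r := by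
  have : 2 * i.1 + 1 < (cfg m r).length := by simp [cfg]; omega
  rw [List.getD_eq_getElem _ _ this]
  have h : (2 * i.1 + 1) / 2 = i.1 := by omega
  simp [cfg, h, Nat.add_mod]

lemma div_succ (M t : ℕ) : M / 2 ^ t = 2 * (M / 2 ^ (t + 1)) + (M.testBit t).toNat := by
  have h1 : M / 2 ^ (t + 1) = M / 2 ^ t / 2 := by rw [pow_succ, Nat.div_div_eq_div_mul]
  rw [h1, Nat.testBit_eq_decide_div_mod_eq]
  have : M / 2 ^ t % 2 = (decide (M / 2 ^ t % 2 = 1)).toNat := by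
    rcases Nat.mod_two_eq_zero_or_one (M / 2 ^ t) with h | h <;> simp [h]
  rw [← this]; omega

lemma sub_succ' (M t : ℕ) : M - t = M - (t + 1) + (decide (t < M)).toNat := by
  by_cases h : t < M
  · simp [h]; omega
  · simp [h]; omega

lemma AV_run (V : RawVASS) (m : Fin V.pairs → ℕ) (t : ℕ) (q : Fin (V.enc + 1))
    (hq : q ∈ Rch (AV V).δ (word m) (AV V).I t) :
    ∃ w : List ℕ, w.length = t ∧ (∀ a ∈ w, a < V.alpha) ∧ ∃ qf ∈ V.finals,
      V.ReachR (q.1, cfg m t) w (qf, cfg m 0) := by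
  induction t generalizing q with
  | zero => exact ⟨[], rfl, by simp, q.1, hq, rfl⟩
  | succ t ih =>
    obtain ⟨q0, hq0, a, ha, u, hu, hl⟩ := hq
    obtain ⟨w, hw, hwa, qf, hqf, hr⟩ := ih q0 hq0
    refine ⟨a :: w, by simp [hw], by simpa [ha] using hwa, qf, hqf, (q0.1, cfg m t), ?_, hr⟩
    refine ⟨u, hu, by simp [cfg], ?_⟩
    intro j hj
    simp only [cfg, List.length_ofFn] at hj
    rcases Nat.even_or_odd' j with ⟨i, rfl | rfl⟩
    · have hi : i < V.pairs := by omega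
      have h1 := (hl ⟨i, hi⟩).1
      simp only at h1
      rw [h1]
      have h2 := cfg_even m t ⟨i, hi⟩
      have h3 := cfg_even m (t + 1) ⟨i, hi⟩
      simp only at h2 h3 ⊢
      rw [h2, h3, sub_succ' (m ⟨i, hi⟩) t]
      simp only [word]
      push_cast; ring
    · have hi : i < V.pairs := by omega
      have h1 := (hl ⟨i, hi⟩).2
      simp only at h1
      rw [h1]
      have h2 := cfg_odd m t ⟨i, hi⟩
      have h3 := cfg_odd m (t + 1) ⟨i, hi⟩
      simp only at h2 h3 ⊢
      rw [h2, h3, div_succ (m ⟨i, hi⟩) t]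
      simp only [word]
      push_cast; ring

lemma AV_lang (V : RawVASS) (m : Fin V.pairs → ℕ) (n : ℕ) (h : Sol (AV V) m n) :
    ∃ w ∈ V.Lang, w.length = n := by
  obtain ⟨hm, q, hq, hF⟩ := h
  obtain ⟨w, hw, ha, qf, hqf, hr⟩ := AV_run V m n q hq
  refine ⟨w, ⟨ha, (qf, cfg m 0), ?_, hqf, ?_⟩, hw⟩
  · have : V.initConfig = (q.1, cfg m n) := by
      have hF : q.1 = V.init := hF
      unfold RawVASS.initConfig
      rw [hF]
      congr 1
      symm
      rw [List.eq_replicate_iff]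
      refine ⟨by simp [cfg], ?_⟩
      intro b hb
      simp only [cfg, List.mem_ofFn] at hb
      obtain ⟨j, rfl⟩ := hb
      split_ifs
      · exact Nat.sub_eq_zero_of_le (hm _)
      · exact Nat.div_eq_of_lt (lt_of_le_of_lt (hm _) Nat.lt_two_pow_self)
    rw [this]; exact hr
  · intro i hi
    have h2 := cfg_even m 0 ⟨i, hi⟩
    have h3 := cfg_odd m 0 ⟨i, hi⟩
    simp only at h2 h3 ⊢
    rw [h2, h3]; simp

lemma reach_seq (V : RawVASS) (w : List ℕ) (ha : ∀ a ∈ w, a < V.alpha) (c c' : RawConfig)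
    (h : V.ReachR c w c') : ∃ cs : ℕ → RawConfig, cs 0 = c ∧ cs w.length = c' ∧
      ∀ k < w.length, ∃ a < V.alpha, V.StepR (cs k) a (cs (k + 1)) := by
  induction w generalizing c with
  | nil => exact ⟨fun _ => c, rfl, h, by simp⟩
  | cons a w ih =>
    obtain ⟨c1, h1, h2⟩ := h
    obtain ⟨cs, e1, e2, e3⟩ := ih (fun b hb => ha b (by simp [hb])) c1 h2
    refine ⟨fun k => Nat.casesOn k c cs, rfl, e2, ?_⟩
    intro k hk
    cases k with
    | zero => exact ⟨a, ha a (by simp), by simpa [e1] using h1⟩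
    | succ k => exact e3 k (by simpa using hk)

lemma lang_AV (V : RawVASS) (hV : V.Restricted) (w : List ℕ) (hw : w ∈ V.Lang) :
    ∃ m, Sol (AV V) m w.length := by
  obtain ⟨ha, c', hr, hfin, heq⟩ := hw
  obtain ⟨cs, e1, e2, e3⟩ := reach_seq V w ha _ _ hr
  set n := w.length with hn
  have hlen : ∀ k ≤ n, (cs k).2.length = 2 * V.pairs := by
    intro k
    induction k with
    | zero => intro _; rw [e1]; simp [RawVASS.initConfig]
    | succ k ih =>
      intro hk
      obtain ⟨a, _, u, _, h, _⟩ := e3 k (by omega)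
      rw [h, ih (by omega)]
  have hinit : ∀ j, (cs 0).2.getD j 0 = 0 := by
    intro j
    rw [e1]
    simp [RawVASS.initConfig, List.getD_eq_getElem?_getD, List.getElem?_replicate]
    split_ifs <;> rfl
  have step : ∀ k < n, ∃ a < V.alpha, ∃ u, ((cs k).1, a, (cs (k+1)).1, u) ∈ V.trans ∧
      ∀ i < V.pairs, ∃ bx b_y : Bool, u.getD (2 * i) ((1 : ℤ), (0 : ℤ)) = (1, (bx.toNat : ℤ)) ∧
        u.getD (2 * i + 1) ((1 : ℤ), (0 : ℤ)) = (2, (b_y.toNat : ℤ)) ∧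
        (cs (k+1)).2.getD (2 * i) 0 = (cs k).2.getD (2 * i) 0 + bx.toNat ∧
        (cs (k+1)).2.getD (2 * i + 1) 0 = 2 * (cs k).2.getD (2 * i + 1) 0 + b_y.toNat := by
    intro k hk
    obtain ⟨a, ha, u, hu, _, hj⟩ := e3 k hk
    refine ⟨a, ha, u, hu, ?_⟩
    intro i hi
    have hx := hj (2 * i) (by rw [hlen k (by omega)]; omega)
    have hy := hj (2 * i + 1) (by rw [hlen k (by omega)]; omega)
    obtain ⟨rx, ry⟩ := (hV.1 _ hu).2 i hi
    simp only at rx ry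
    have ex : ∃ bx : Bool, u.getD (2 * i) ((1 : ℤ), (0 : ℤ)) = (1, (bx.toNat : ℤ)) := by
      rcases rx with h | h
      · exact ⟨false, by simpa using h⟩
      · exact ⟨true, by simpa using h⟩
    have ey : ∃ bx : Bool, u.getD (2 * i + 1) ((1 : ℤ), (0 : ℤ)) = (2, (bx.toNat : ℤ)) := by
      rcases ry with h | h
      · exact ⟨false, by simpa using h⟩
      · exact ⟨true, by simpa using h⟩
    obtain ⟨bx, ex⟩ := ex
    obtain ⟨b_y, ey⟩ := ey
    refine ⟨bx, b_y, ex, ey, ?_, ?_⟩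
    · rw [ex] at hx; simp only at hx; omega
    · rw [ey] at hy; simp only at hy; omega
  have hrun : V.IsRunFromInit ((List.range (n + 1)).map cs) := by
    refine ⟨by simp [List.range_succ_eq_map, e1], ?_⟩
    rw [List.Chain', List.isChain_iff_getElem]
    intro k hk
    simp only [List.length_map, List.length_range] at hk
    obtain ⟨a, _, h⟩ := e3 k (by omega)
    exact ⟨a, by simpa using h⟩
  have hget : ∀ k ≤ n, ((List.range (n + 1)).map cs).getD k default = cs k := by
    intro k hk
    rw [List.getD_eq_getElem _ _ (by simp; omega)]
    simp
  let m : Fin V.pairs → ℕ := fun i => (cs n).2.getD (2 * i.1) 0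
  have hX : ∀ i : Fin V.pairs, ∀ k ≤ n, (cs k).2.getD (2 * i.1) 0 = m i - (n - k) := by
    intro i k hk
    refine seq_lemma (fun k => (cs k).2.getD (2 * i.1) 0) n (hinit _) ?_ ?_ k hk
    · intro k hk
      obtain ⟨a, _, u, _, h⟩ := step k hk
      obtain ⟨bx, b_y, _, _, h, _⟩ := h i.1 i.2
      cases bx
      · left; simpa using h
      · right; simpa using h
    · intro k hk h k' hkk' hk'
      have := hV.2 _ hrun i.1 i.2 k (by simp; omega)
        (by rw [hget _ (by omega), hget _ (by omega)]; exact h) k' hkk' (by simp; omega)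
      rw [hget _ (by omega), hget _ (by omega)] at this
      exact this
  have hYn : ∀ i : Fin V.pairs, (cs n).2.getD (2 * i.1 + 1) 0 = m i := by
    intro i
    have := heq i.1 i.2
    rw [← e2] at this
    exact this.symm
  have hY : ∀ i : Fin V.pairs, ∀ t ≤ n, (cs (n - t)).2.getD (2 * i.1 + 1) 0 = m i / 2 ^ t := by
    intro i t
    induction t with
    | zero => intro _; simpa using hYn i
    | succ t ih =>
      intro ht
      have ih := ih (by omega)
      obtain ⟨a, _, u, _, h⟩ := step (n - (t + 1)) (by omega)
      obtain ⟨bx, b_y, _, _, _, h⟩ := h i.1 i.2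
      rw [show n - (t + 1) + 1 = n - t by omega, ih] at h
      have h1 : m i / 2 ^ (t + 1) = m i / 2 ^ t / 2 := by rw [pow_succ, Nat.div_div_eq_div_mul]
      have := Bool.toNat_le b_y
      omega
  have hst : ∀ k ≤ n, (cs k).1 ≤ V.enc := by
    intro k hk
    cases k with
    | zero => rw [e1]; exact init_le V
    | succ k =>
      obtain ⟨a, _, u, hu, _⟩ := e3 k (by omega)
      exact (trans_le V hu).2
  have main : ∀ t (ht : t ≤ n), (⟨(cs (n - t)).1, by have := hst (n - t) (by omega); omega⟩ :
      Fin (V.enc + 1)) ∈ Rch (AV V).δ (word m) (AV V).I t := by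
    intro t
    induction t with
    | zero =>
      intro _
      show (cs (n - 0)).1 ∈ V.finals
      rw [Nat.sub_zero, e2]; exact hfin
    | succ t ih =>
      intro ht
      refine ⟨_, ih (by omega), ?_⟩
      obtain ⟨a, ha, u, hu, h⟩ := step (n - (t + 1)) (by omega)
      rw [show n - (t + 1) + 1 = n - t by omega] at hu h
      refine ⟨a, ha, u, hu, ?_⟩
      intro i
      obtain ⟨bx, b_y, h1, h2, h3, h4⟩ := h i.1 i.2
      rw [h1, h2]
      rw [hY i t (by omega), hY i (t + 1) ht, div_succ (m i) t] at h4
      rw [hX i _ (by omega), hX i _ (by omega), show n - (n - t) = t by omega,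
        show n - (n - (t + 1)) = t + 1 by omega, sub_succ' (m i) t] at h3
      simp only [word]
      constructor
      · congr 2; omega
      · congr 2; omega
  refine ⟨m, ?_, _, main n le_rfl, ?_⟩
  · intro i
    have := hX i 0 (by omega)
    rw [hinit] at this
    omega
  · show (cs (n - n)).1 = V.init
    rw [Nat.sub_self, e1]; rfl

/-- Small model property. -/
lemma small (V : RawVASS) (hV : V.Restricted) (h : ∃ w, w ∈ V.Lang) :
    ∃ w ∈ V.Lang, w.length ≤ fb (V.enc + 1) V.pairs V.pairs := by
  obtain ⟨w, hw⟩ := h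
  obtain ⟨m, hm⟩ := lang_AV V hV w hw
  obtain ⟨m', n', _, hs, hn⟩ := Bd_main (V.enc + 1) V.pairs (Fin V.pairs) inferInstance
    (Fin (V.enc + 1)) inferInstance (AV V) Finset.univ (by simp) (by simp)
    ⟨m, w.length, by simp, hm⟩
  obtain ⟨w', hw', hl⟩ := AV_lang V m' n' hs
  exact ⟨w', hw', by omega⟩

/-! ### The algorithm -/

abbrev Tr := ℕ × ℕ × ℕ × List (ℤ × ℤ)
abbrev Dt := ℕ × ℕ × ℕ × List Tr × ℕ × List ℕ

/-- apply an update -/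
def app (u : ℤ × ℤ) (x : ℕ) : ℕ :=
  if u = (1, 0) then x else if u = (1, 1) then x + 1 else if u = (2, 0) then x + x else x + x + 1

/-- apply all updates -/
def apps (p : ℕ) (u : List (ℤ × ℤ)) (c : List ℕ) : List ℕ :=
  (List.range (2 * p)).map (fun j => app (u.getD j (1, 0)) (c.getD j 0))

/-- apply a transition -/
def stepO (D : Dt) (c : RawConfig) (t : Tr) : Option RawConfig :=
  if t.1 = c.1 ∧ t.2.1 < D.2.2.1 then some (t.2.2.1, apps D.2.1 t.2.2.2 c.2) else none

/-- all successors -/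
def stepL (D : Dt) (l : List RawConfig) : List RawConfig :=
  l.flatMap (fun c => D.2.2.2.1.filterMap (stepO D c))

/-- configurations after `n` steps -/
def reachL (D : Dt) (n : ℕ) : List RawConfig :=
  (stepL D)^[n] [(D.2.2.2.2.1, (List.range (2 * D.2.1)).map (fun _ => 0))]

/-- acceptance -/
def acc (D : Dt) (c : RawConfig) : Prop :=
  (∃ a ∈ D.2.2.2.2.2, a = c.1) ∧
    ∀ i ∈ List.range D.2.1, c.2.getD (2 * i) 0 = c.2.getD (2 * i + 1) 0

/-- bounded search -/
def ok (D : Dt) (b : ℕ) : Prop := ∃ c ∈ (List.range (b + 1)).flatMap (reachL D), acc D c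

/-- finite data of `V` -/
def dat (V : RawVASS) : Dt := (V.states, V.pairs, V.alpha, V.trans, V.init, V.finals)

lemma apps_spec (V : RawVASS) (hV : V.Restricted) (u : List (ℤ × ℤ)) (q a q' : ℕ)
    (hu : (q, a, q', u) ∈ V.trans) (c c' : List ℕ) (hc : c.length = 2 * V.pairs) :
    c' = apps V.pairs u c ↔ (c'.length = c.length ∧ ∀ j < c.length,
      (c'.getD j 0 : ℤ) = (u.getD j ((1 : ℤ), (0 : ℤ))).1 * (c.getD j 0 : ℤ)
        + (u.getD j ((1 : ℤ), (0 : ℤ))).2) := by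
  have happ : ∀ j < 2 * V.pairs, (app (u.getD j (1, 0)) (c.getD j 0) : ℤ) =
      (u.getD j ((1 : ℤ), (0 : ℤ))).1 * (c.getD j 0 : ℤ) + (u.getD j ((1 : ℤ), (0 : ℤ))).2 := by
    intro j hj
    have h : ∀ v : ℤ × ℤ, ∀ x : ℕ, (v = (1,0) ∨ v = (1,1)) ∨ (v = (2,0) ∨ v = (2,1)) →
        (app v x : ℤ) = v.1 * x + v.2 := by
      rintro v x ((rfl | rfl) | (rfl | rfl)) <;> simp [app] <;> ring
    apply h
    rcases Nat.even_or_odd' j with ⟨i, rfl | rfl⟩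
    · exact Or.inl ((hV.1 _ hu).2 i (by omega)).1
    · exact Or.inr ((hV.1 _ hu).2 i (by omega)).2
  have hl : (apps V.pairs u c).length = 2 * V.pairs := by simp [apps]
  have hg : ∀ j < 2 * V.pairs, (apps V.pairs u c).getD j 0 = app (u.getD j (1, 0)) (c.getD j 0) := by
    intro j hj
    rw [List.getD_eq_getElem _ _ (by omega)]
    simp [apps]
  constructor
  · rintro rfl
    refine ⟨by omega, ?_⟩
    intro j hj
    rw [hg j (by omega), happ j (by omega)]
  · rintro ⟨h1, h2⟩
    apply List.ext_getElem (by omega)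
    intro j hj hj'
    have e := h2 j (by omega)
    rw [← happ j (by omega), ← hg j (by omega), List.getD_eq_getElem _ _ hj,
      List.getD_eq_getElem _ _ hj'] at e
    exact_mod_cast e

lemma stepL_spec (V : RawVASS) (hV : V.Restricted) (l : List RawConfig)
    (hl : ∀ c ∈ l, c.2.length = 2 * V.pairs) (c' : RawConfig) :
    c' ∈ stepL (dat V) l ↔ ∃ c ∈ l, ∃ a < V.alpha, V.StepR c a c' := by
  simp only [stepL, List.mem_flatMap, List.mem_filterMap]
  constructor
  · rintro ⟨c, hc, ⟨q, a, q', u⟩, ht, h⟩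
    refine ⟨c, hc, ?_⟩
    unfold stepO at h
    split_ifs at h with hh
    obtain ⟨rfl, hh⟩ := hh
    simp only [Option.some.injEq] at h
    subst h
    exact ⟨a, hh, u, ht, (apps_spec V hV u _ _ _ ht c.2 _ (hl c hc)).1 rfl⟩
  · rintro ⟨c, hc, a, ha, u, hu, h⟩
    refine ⟨c, hc, (c.1, a, c'.1, u), hu, ?_⟩
    unfold stepO
    rw [if_pos ⟨rfl, ha⟩]
    simp only [Option.some.injEq]
    exact Prod.ext rfl ((apps_spec V hV u _ _ _ hu c.2 _ (hl c hc)).2 h).symm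

lemma iter_spec (V : RawVASS) (hV : V.Restricted) (n : ℕ) (l : List RawConfig)
    (hl : ∀ c ∈ l, c.2.length = 2 * V.pairs) (c' : RawConfig) :
    c' ∈ (stepL (dat V))^[n] l ↔ ∃ c ∈ l, ∃ w : List ℕ, w.length = n ∧ (∀ a ∈ w, a < V.alpha) ∧
      V.ReachR c w c' := by
  induction n generalizing l with
  | zero =>
    simp only [Function.iterate_zero, id]
    constructor
    · intro h; exact ⟨c', h, [], rfl, by simp, rfl⟩
    · rintro ⟨c, hc, w, hw, _, h⟩
      rw [List.length_eq_zero_iff] at hw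
      subst hw
      have h : c = c' := h
      exact h ▸ hc
  | succ n ih =>
    rw [Function.iterate_succ_apply, ih]
    · constructor
      · rintro ⟨c, hc, w, hw, hwa, h⟩
        obtain ⟨c0, hc0, a, ha, hs⟩ := (stepL_spec V hV l hl c).1 hc
        exact ⟨c0, hc0, a :: w, by simp [hw], by simpa [ha] using hwa, c, hs, h⟩
      · rintro ⟨c, hc, w, hw, hwa, h⟩
        cases w with
        | nil => simp at hw
        | cons a w =>
          obtain ⟨c1, hs, h⟩ := h
          exact ⟨c1, (stepL_spec V hV l hl c1).2 ⟨c, hc, a, hwa a (by simp), hs⟩, w,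
            by simpa using hw, fun b hb => hwa b (by simp [hb]), h⟩
    · intro c hc
      obtain ⟨c0, hc0, a, ha, u, _, h, _⟩ := (stepL_spec V hV l hl c).1 hc
      rw [h, hl c0 hc0]

lemma ok_spec (V : RawVASS) (hV : V.Restricted) (b : ℕ) :
    ok (dat V) b ↔ ∃ w ∈ V.Lang, w.length ≤ b := by
  have hi : ((dat V).2.2.2.2.1, (List.range (2 * (dat V).2.1)).map (fun _ => 0)) =
      V.initConfig := by
    simp [dat, RawVASS.initConfig]
  have hacc : ∀ c, acc (dat V) c ↔ c.1 ∈ V.finals ∧ ∀ i < V.pairs,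
      c.2.getD (2 * i) 0 = c.2.getD (2 * i + 1) 0 := by
    intro c; simp [acc, dat]
  unfold ok
  simp only [List.mem_flatMap, reachL, hacc, hi, List.mem_range]
  have hl : ∀ c ∈ [V.initConfig], c.2.length = 2 * V.pairs := by simp [RawVASS.initConfig]
  constructor
  · rintro ⟨c, ⟨n, hn, hc⟩, ha⟩
    obtain ⟨c0, hc0, w, hw, hwa, hr⟩ := (iter_spec V hV n _ hl c).1 hc
    simp only [List.mem_singleton] at hc0
    subst hc0
    exact ⟨w, ⟨hwa, c, hr, ha⟩, by omega⟩
  · rintro ⟨w, ⟨hwa, c, hr, ha⟩, hw⟩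
    exact ⟨c, ⟨w.length, by omega, (iter_spec V hV _ _ hl c).2 ⟨_, by simp, w, rfl, hwa, hr⟩⟩, ha⟩

end LV
namespace LV

lemma pr_pow : Primrec (fun n : ℕ => 2 ^ n) :=
  (Primrec.nat_rec₁ (f := fun _ v => v + v) 1
    (Primrec.nat_add.comp Primrec.snd Primrec.snd).to₂).of_eq fun n => by
      induction n with
      | zero => rfl
      | succ n ih => simp only at ih ⊢; rw [ih, pow_succ]; ring

lemma pr_fact : Primrec Nat.factorial :=
  (Primrec.nat_rec₁ (f := fun n v => (n + 1) * v) 1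
    (Primrec.nat_mul.comp (Primrec.succ.comp Primrec.fst) Primrec.snd).to₂).of_eq fun n => by
      induction n with
      | zero => rfl
      | succ n ih => simp only at ih ⊢; rw [ih, Nat.factorial_succ]

lemma pr_thr : Primrec thr := Primrec.nat_add.comp pr_pow (Primrec.const 4)
lemma pr_per : Primrec per := pr_fact.comp pr_thr
lemma pr_cls : Primrec cls := Primrec.nat_add.comp pr_thr pr_per
lemma pr_nxt : Primrec nxt :=
  Primrec.nat_mul.comp Primrec.id (Primrec.nat_mul.comp (Primrec.const 2)
    (Primrec.nat_mul.comp pr_cls (Primrec.nat_mul.comp pr_cls pr_cls)))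
lemma pr_ss : Primrec₂ ss :=
  Primrec.nat_iterate (f := fun p : ℕ × ℕ => p.2) (g := fun p : ℕ × ℕ => p.1)
    (h := fun _ x => nxt x) Primrec.snd Primrec.fst (pr_nxt.comp Primrec.snd).to₂

lemma pr_fb : Primrec (fun p : ℕ × ℕ => fb p.1 p.2 p.2) := by
  have hs : Primrec (fun x : (ℕ × ℕ) × (ℕ × ℕ) => ss x.1.1 (x.1.2 - (x.2.1 + 1))) :=
    pr_ss.comp (Primrec.fst.comp Primrec.fst)
      (Primrec.nat_sub.comp (Primrec.snd.comp Primrec.fst)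
        (Primrec.succ.comp (Primrec.fst.comp Primrec.snd)))
  exact Primrec.nat_rec' (f := fun p : ℕ × ℕ => p.2) (g := fun p : ℕ × ℕ => cls (ss p.1 p.2))
    (h := fun (p : ℕ × ℕ) (x : ℕ × ℕ) =>
      2 ^ (x.2 + thr (ss p.1 (p.2 - (x.1 + 1)))) + cls (ss p.1 (p.2 - (x.1 + 1))))
    Primrec.snd (pr_cls.comp (pr_ss.comp Primrec.fst Primrec.snd))
    (Primrec.nat_add.comp (pr_pow.comp (Primrec.nat_add.comp (Primrec.snd.comp Primrec.snd)
      (pr_thr.comp hs))) (pr_cls.comp hs)).to₂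

lemma pr_app : Primrec₂ app := by
  have he : ∀ v : ℤ × ℤ, PrimrecPred (fun p : (ℤ × ℤ) × ℕ => p.1 = v) := fun v =>
    Primrec.eq.comp Primrec.fst (Primrec.const v)
  have hd : Primrec (fun p : (ℤ × ℤ) × ℕ => p.2 + p.2) :=
    Primrec.nat_add.comp Primrec.snd Primrec.snd
  exact Primrec.ite (he _) Primrec.snd (Primrec.ite (he _) (Primrec.succ.comp Primrec.snd)
    (Primrec.ite (he _) hd (Primrec.succ.comp hd)))

lemma pr_two : Primrec (fun n : ℕ => 2 * n) := Primrec.nat_mul.comp (Primrec.const 2) Primrec.id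

lemma pr_apps : Primrec (fun x : ℕ × List (ℤ × ℤ) × List ℕ => apps x.1 x.2.1 x.2.2) := by
  refine Primrec.list_map (f := fun x : ℕ × List (ℤ × ℤ) × List ℕ => List.range (2 * x.1))
    (g := fun x j => app (x.2.1.getD j (1, 0)) (x.2.2.getD j 0))
    (Primrec.list_range.comp (pr_two.comp Primrec.fst)) ?_
  exact (pr_app.comp
    ((Primrec.list_getD ((1 : ℤ), (0 : ℤ))).comp
      (Primrec.fst.comp (Primrec.snd.comp Primrec.fst)) Primrec.snd)
    ((Primrec.list_getD 0).comp
      (Primrec.snd.comp (Primrec.snd.comp Primrec.fst)) Primrec.snd)).to₂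


lemma pr_pairs : Primrec (fun D : Dt => D.2.1) := Primrec.fst.comp Primrec.snd
lemma pr_alpha : Primrec (fun D : Dt => D.2.2.1) :=
  Primrec.fst.comp (Primrec.snd.comp Primrec.snd)
lemma pr_trans : Primrec (fun D : Dt => D.2.2.2.1) :=
  Primrec.fst.comp (Primrec.snd.comp (Primrec.snd.comp Primrec.snd))
lemma pr_init : Primrec (fun D : Dt => D.2.2.2.2.1) :=
  Primrec.fst.comp (Primrec.snd.comp (Primrec.snd.comp (Primrec.snd.comp Primrec.snd)))
lemma pr_finals : Primrec (fun D : Dt => D.2.2.2.2.2) :=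
  Primrec.snd.comp (Primrec.snd.comp (Primrec.snd.comp (Primrec.snd.comp Primrec.snd)))

lemma pr_stepO : Primrec (fun x : (Dt × RawConfig) × Tr => stepO x.1.1 x.1.2 x.2) := by
  have hD : Primrec (fun x : (Dt × RawConfig) × Tr => x.1.1) := Primrec.fst.comp Primrec.fst
  have hc : Primrec (fun x : (Dt × RawConfig) × Tr => x.1.2) := Primrec.snd.comp Primrec.fst
  have t1 : Primrec (fun x : (Dt × RawConfig) × Tr => x.2.1) := Primrec.fst.comp Primrec.snd
  have t2 : Primrec (fun x : (Dt × RawConfig) × Tr => x.2.2.1) :=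
    Primrec.fst.comp (Primrec.snd.comp Primrec.snd)
  have t3 : Primrec (fun x : (Dt × RawConfig) × Tr => x.2.2.2.1) :=
    Primrec.fst.comp (Primrec.snd.comp (Primrec.snd.comp Primrec.snd))
  have t4 : Primrec (fun x : (Dt × RawConfig) × Tr => x.2.2.2.2) :=
    Primrec.snd.comp (Primrec.snd.comp (Primrec.snd.comp Primrec.snd))
  have hP : PrimrecPred (fun x : (Dt × RawConfig) × Tr => x.2.1 = x.1.2.1 ∧ x.2.2.1 < x.1.1.2.2.1) := by
    have c1 : Primrec (fun x : (Dt × RawConfig) × Tr => x.1.2.1) := Primrec.fst.comp hc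
    have c2 : Primrec (fun x : (Dt × RawConfig) × Tr => x.1.1.2.2.1) := pr_alpha.comp hD
    exact PrimrecPred.and (Primrec.eq.comp t1 c1) (Primrec.nat_lt.comp t2 c2)
  have c3 : Primrec (fun x : (Dt × RawConfig) × Tr => x.1.2.2) := Primrec.snd.comp hc
  have c4 : Primrec (fun x : (Dt × RawConfig) × Tr => x.1.1.2.1) := pr_pairs.comp hD
  have c5 : Primrec (fun x : (Dt × RawConfig) × Tr => (x.1.1.2.1, x.2.2.2.2, x.1.2.2)) :=
    Primrec.pair c4 (Primrec.pair t4 c3)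
  have c6 : Primrec (fun x : (Dt × RawConfig) × Tr => apps x.1.1.2.1 x.2.2.2.2 x.1.2.2) := by
    have h := pr_apps.comp c5
    exact h
  have c7 : Primrec (fun x : (Dt × RawConfig) × Tr =>
      some (x.2.2.2.1, apps x.1.1.2.1 x.2.2.2.2 x.1.2.2)) :=
    Primrec.option_some.comp (Primrec.pair t3 c6)
  have c8 := Primrec.ite hP c7 (Primrec.const none)
  exact c8.of_eq fun x => by simp only [stepO]


lemma pr_stepL : Primrec₂ stepL := by
  refine Primrec.list_flatMap (f := fun x : Dt × List RawConfig => x.2)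
    (g := fun x c => x.1.2.2.2.1.filterMap (stepO x.1 c)) Primrec.snd ?_
  refine Primrec.listFilterMap (f := fun x : (Dt × List RawConfig) × RawConfig => x.1.1.2.2.2.1)
    (g := fun x t => stepO x.1.1 x.2 t) (pr_trans.comp (Primrec.fst.comp Primrec.fst)) ?_
  have h1 : Primrec (fun x : ((Dt × List RawConfig) × RawConfig) × Tr => x.1.1.1) :=
    Primrec.fst.comp (Primrec.fst.comp Primrec.fst)
  have h2 : Primrec (fun x : ((Dt × List RawConfig) × RawConfig) × Tr => x.1.2) :=
    Primrec.snd.comp Primrec.fst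
  have h3 : Primrec (fun x : ((Dt × List RawConfig) × RawConfig) × Tr =>
      ((x.1.1.1, x.1.2), x.2)) := Primrec.pair (Primrec.pair h1 h2) Primrec.snd
  have h4 : Primrec (fun x : ((Dt × List RawConfig) × RawConfig) × Tr =>
      stepO x.1.1.1 x.1.2 x.2) := by
    have h := pr_stepO.comp h3
    exact h
  exact h4


lemma pr_reachL : Primrec₂ reachL := by
  refine Primrec.nat_iterate (f := fun x : Dt × ℕ => x.2)
    (g := fun x : Dt × ℕ => [((x.1.2.2.2.2.1, (List.range (2 * x.1.2.1)).map (fun _ => 0)) :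
      RawConfig)])
    (h := fun x l => stepL x.1 l) Primrec.snd ?_
    (pr_stepL.comp (Primrec.fst.comp Primrec.fst) Primrec.snd).to₂
  refine Primrec.list_cons.comp (Primrec.pair (pr_init.comp Primrec.fst) ?_) (Primrec.const [])
  exact Primrec.list_map (f := fun x : Dt × ℕ => List.range (2 * x.1.2.1)) (g := fun _ _ => 0)
    (Primrec.list_range.comp (pr_two.comp (pr_pairs.comp Primrec.fst))) (Primrec.const 0).to₂


lemma pr_acc : PrimrecRel (fun (c : RawConfig) (D : Dt) => acc D c) := by
  have h1 : PrimrecRel (fun (l : List ℕ) (q : ℕ) => ∃ a ∈ l, a = q) :=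
    PrimrecRel.exists_mem_list (R := fun a q : ℕ => a = q) Primrec.eq
  have h2 : PrimrecRel (fun (l : List ℕ) (c : List ℕ) =>
      ∀ i ∈ l, c.getD (2 * i) 0 = c.getD (2 * i + 1) 0) := by
    refine PrimrecRel.forall_mem_list
      (R := fun (i : ℕ) (c : List ℕ) => c.getD (2 * i) 0 = c.getD (2 * i + 1) 0) ?_
    exact Primrec.eq.comp
      ((Primrec.list_getD 0).comp Primrec.snd (pr_two.comp Primrec.fst))
      ((Primrec.list_getD 0).comp Primrec.snd (Primrec.succ.comp (pr_two.comp Primrec.fst)))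
  exact PrimrecPred.and
    (h1.comp (pr_finals.comp Primrec.snd) (Primrec.fst.comp Primrec.fst))
    (h2.comp (Primrec.list_range.comp (pr_pairs.comp Primrec.snd))
      (Primrec.snd.comp Primrec.fst))


lemma pr_ok : PrimrecRel ok := by
  have h := PrimrecRel.exists_mem_list pr_acc
  refine h.comp (f := fun x : Dt × ℕ => (List.range (x.2 + 1)).flatMap (reachL x.1))
    (g := fun x => x.1) ?_ Primrec.fst
  exact Primrec.list_flatMap (f := fun x : Dt × ℕ => List.range (x.2 + 1))
    (g := fun x n => reachL x.1 n)
    (Primrec.list_range.comp (Primrec.succ.comp Primrec.snd))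
    (pr_reachL.comp (Primrec.fst.comp Primrec.fst) Primrec.snd).to₂


lemma pr_main : PrimrecRel (fun (D : Dt) (e : ℕ) => ok D (fb (e + 1) D.2.1 D.2.1)) := by
  have h1 : Primrec (fun x : Dt × ℕ => x.2 + 1) := Primrec.succ.comp Primrec.snd
  have h2 : Primrec (fun x : Dt × ℕ => x.1.2.1) := pr_pairs.comp Primrec.fst
  have h3 : Primrec (fun x : Dt × ℕ => (x.2 + 1, x.1.2.1)) := Primrec.pair h1 h2
  have h4 : Primrec (fun x : Dt × ℕ => fb (x.2 + 1) x.1.2.1 x.1.2.1) := by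
    have h := pr_fb.comp h3
    exact h
  exact PrimrecRel.comp pr_ok Primrec.fst h4

/-- Deciding a primitive recursive relation between data and their codes. -/
lemma gen {α : Type} [Primcodable α] (P : α → ℕ → Prop) (hP : PrimrecRel P) :
    ∃ g : ℕ → Bool, Computable g ∧ ∀ D : α, g (Encodable.encode D) = true ↔
      P D (Encodable.encode D) := by
  classical
  have hp : Primrec (fun x : α × ℕ => decide (P x.1 x.2)) := PrimrecPred.decide hP
  have hq : Primrec₂ (fun (e : ℕ) (D : α) => decide (P D e)) := by
    have h0 : Primrec (fun x : ℕ × α => (x.2, x.1)) := Primrec.pair Primrec.snd Primrec.fst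
    have h := hp.comp h0
    exact h
  have hg : Primrec (fun e : ℕ => Option.casesOn (motive := fun _ => Bool)
      (Encodable.decode e : Option α) false (fun D => decide (P D e))) :=
    Primrec.option_casesOn Primrec.decode (Primrec.const false) hq
  refine ⟨_, hg.to_comp, ?_⟩
  intro D
  simp [Encodable.encodek]

end LV

/-- Language emptiness of restricted laVASS is decidable: a computable function on
encodings of laVASS returns, on every restricted laVASS `V`, the value `true` exactly
when `L(V) ≠ ∅`. -/
theorem restricted_lavass_emptiness_decidable :
    ∃ g : ℕ → Bool, Computable g ∧
      ∀ V : RawVASS, V.Restricted → (g V.enc = true ↔ ∃ w, w ∈ V.Lang) := by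
  obtain ⟨g, hg, hs⟩ := LV.gen _ LV.pr_main
  refine ⟨g, hg, ?_⟩
  intro V hV
  have h1 : g V.enc = true ↔ LV.ok (LV.dat V) (LV.fb (V.enc + 1) V.pairs V.pairs) :=
    hs (LV.dat V)
  rw [h1, LV.ok_spec V hV]
  exact ⟨fun ⟨w, hw, _⟩ => ⟨w, hw⟩, LV.small V hV⟩
end

section
/- Let V be a restricted laVASS of dimension 2d with control-state set Q, |Q| ≥ 2, and set M_i := ⌊|Q|^{(1/8)·32^{i−1}+1}⌋ for 1 ≤ i ≤ d. Let π = c₁ → c₂ → ⋯ → c_n be an accepting run of V (c₁ the initial configuration, c_n a final configuration) such that in c_n the values m₁, …, m_d of the x-counters satisfy m₁ ≥ m₂ ≥ ⋯ ≥ m_d > 0, and for 1 ≤ i ≤ d let X(i) (resp. Y(i)) be the first position j ∈ {1, …, n} at which the counter x_i (resp. y_i) has non-zero value. If Y(i) − X(i) ≤ d·M_i for some 1 ≤ i ≤ d with d·M_i ≥ 3, then n − Y(i) < d·M_i, and consequently in c_n the values m_j, n_j of the counters x_j, y_j satisfy m_j ≤ 2·d·M_i and n_j ≤ 2·d·M_i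 for all i ≤ j ≤ d. -/
/-- `M_i := ⌊|Q|^{(1/8)·32^{i−1}+1}⌋`, here indexed `0`-based: `Mfun Q i` corresponds to the
paper's `M_{i+1}`, i.e. the exponent is `32^i/8 + 1`. -/
noncomputable def Mfun (Q i : ℕ) : ℕ := ⌊(Q : ℝ) ^ ((32 : ℝ) ^ i / 8 + 1)⌋₊

theorem spl_arith (k D : ℕ) (h3 : 3 ≤ D) (h : 2 ^ k ≤ k + D + 1) : k < D := by
  by_contra hk
  have hk3 : 3 ≤ k := by omega
  have : 2 * k + 1 < 2 ^ k := by
    clear h hk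
    induction k, hk3 using Nat.le_induction with
    | base => norm_num
    | succ n hn ih => rw [pow_succ]; omega
  omega

theorem spl_step {σ : Type} {d : ℕ} (V : LAVASS σ (2 * d)) (hres : IsRestricted d V)
    (cs : List V.Config) (hrun : V.IsRunFromInit cs) (i : Fin d) (j : ℕ)
    (hj : j + 1 < cs.length) :
    ((cs.get ⟨j + 1, hj⟩).2 (xIdx i) = (cs.get ⟨j, by omega⟩).2 (xIdx i) ∨
      (cs.get ⟨j + 1, hj⟩).2 (xIdx i) = (cs.get ⟨j, by omega⟩).2 (xIdx i) + 1) ∧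
    2 * (cs.get ⟨j, by omega⟩).2 (yIdx i) ≤ (cs.get ⟨j + 1, hj⟩).2 (yIdx i) := by
  obtain ⟨a, hΔ, hs⟩ := List.isChain_iff_getElem.mp hrun.2 j hj
  obtain ⟨hx, hy⟩ := hres.1 _ hΔ i
  have h1 := hs (xIdx i)
  have h2 := hs (yIdx i)
  simp only [List.get_eq_getElem]
  constructor
  · rcases hx with hx | hx <;> rw [hx] at h1 <;> simp only [] at h1 <;> omega
  · rcases hy with hy | hy <;> rw [hy] at h2 <;> simp only [] at h2 <;> omega

/-- Let `V` be a restricted laVASS of dimension `2d` with `|Q| ≥ 2`, and let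
`cs = c₁ → ⋯ → c_n` be an accepting run such that the final values of the `x`-counters
satisfy `m₁ ≥ ⋯ ≥ m_d > 0`. Let `X i` (resp. `Y i`) be the first position at which `x_i`
(resp. `y_i`) is non-zero (positions `0`-based). If `Y i − X i ≤ d·M_i` for some `i` with
`d·M_i ≥ 3`, then `n − Y i < d·M_i`, and consequently in the last configuration the values
of `x_j` and `y_j` are at most `2·d·M_i` for all `j ≥ i`. -/
theorem small_path_lemma {σ : Type} {d : ℕ} (V : LAVASS σ (2 * d))
    (hres : IsRestricted d V)
    (hQ : 2 ≤ @Fintype.card V.Q V.fintypeQ)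
    (cs : List V.Config) (hne : cs ≠ [])
    (hrun : V.IsRunFromInit cs)
    (hF : (cs.getLast hne).1 ∈ V.F) (hSf : (cs.getLast hne).2 ∈ V.Sf)
    (hdec : ∀ i j : Fin d, i ≤ j →
      (cs.getLast hne).2 (xIdx j) ≤ (cs.getLast hne).2 (xIdx i))
    (hpos : ∀ i : Fin d, 0 < (cs.getLast hne).2 (xIdx i))
    (X Y : Fin d → ℕ)
    (hXlt : ∀ i, X i < cs.length) (hYlt : ∀ i, Y i < cs.length)
    (hX0 : ∀ i, (cs.get ⟨X i, hXlt i⟩).2 (xIdx i) ≠ 0)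
    (hXmin : ∀ i, ∀ j, ∀ hj : j < cs.length, j < X i → (cs.get ⟨j, hj⟩).2 (xIdx i) = 0)
    (hY0 : ∀ i, (cs.get ⟨Y i, hYlt i⟩).2 (yIdx i) ≠ 0)
    (hYmin : ∀ i, ∀ j, ∀ hj : j < cs.length, j < Y i → (cs.get ⟨j, hj⟩).2 (yIdx i) = 0)
    (i : Fin d)
    (h3 : 3 ≤ d * Mfun (@Fintype.card V.Q V.fintypeQ) i.1)
    (hsmall : Y i - X i ≤ d * Mfun (@Fintype.card V.Q V.fintypeQ) i.1) :
    cs.length - 1 - Y i < d * Mfun (@Fintype.card V.Q V.fintypeQ) i.1 ∧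
    ∀ j : Fin d, i ≤ j →
      (cs.getLast hne).2 (xIdx j) ≤ 2 * d * Mfun (@Fintype.card V.Q V.fintypeQ) i.1 ∧
      (cs.getLast hne).2 (yIdx j) ≤ 2 * d * Mfun (@Fintype.card V.Q V.fintypeQ) i.1 := by
  obtain ⟨L, hL⟩ : ∃ L, cs.length = L + 1 :=
    ⟨cs.length - 1, by have := List.length_pos_iff.mpr hne; omega⟩
  have hlast : cs.getLast hne = cs.get ⟨L, by omega⟩ := by
    rw [List.getLast_eq_getElem]; simp [hL]
  have hfin : ∀ j, (cs.getLast hne).2 (xIdx j) = (cs.getLast hne).2 (yIdx j) := by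
    rw [hres.2.2] at hSf; exact hSf
  have hYv : ∀ k, ∀ hk : Y i + k < cs.length,
      2 ^ k ≤ (cs.get ⟨Y i + k, hk⟩).2 (yIdx i) := by
    intro k
    induction k with
    | zero => intro hk; have := hY0 i; simp only [pow_zero]; exact Nat.pos_of_ne_zero this
    | succ k ih =>
      intro hk
      have h1 := ih (by omega)
      have h2 := (spl_step V hres cs hrun i (Y i + k) hk).2
      rw [pow_succ]
      exact le_trans (by omega) h2
  have hXv : ∀ k, ∀ hk : X i + k < cs.length,
      (cs.get ⟨X i + k, hk⟩).2 (xIdx i) ≤ k + 1 := by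
    intro k
    induction k with
    | zero =>
      intro hk
      suffices H : ∀ p, p = X i → ∀ hp : p < cs.length,
          (cs.get ⟨p, hp⟩).2 (xIdx i) ≤ 0 + 1 from H _ rfl hk
      intro q hq hp
      rcases q with _ | p
      · have h0 : cs.get ⟨0, by omega⟩ = V.initConfig := by
          have := hrun.1
          rw [List.head?_eq_getElem?, List.getElem?_eq_getElem (by omega)] at this
          exact Option.some.inj this
        rw [h0]; simp [LAVASS.initConfig]
      · have h1 := (spl_step V hres cs hrun i p (by omega)).1
        have h2 := hXmin i p (by omega) (by omega)
        omega
    | succ k ih =>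
      intro hk
      have h1 := ih (by omega)
      have h2 := (spl_step V hres cs hrun i (X i + k) hk).1
      show (cs.get ⟨X i + k + 1, hk⟩).2 (xIdx i) ≤ _
      omega
  have hXi := hXlt i
  have hYi := hYlt i
  have hy := hYv (L - Y i) (by omega)
  have hx := hXv (L - X i) (by omega)
  have e1 : Y i + (L - Y i) = L := by omega
  have e2 : X i + (L - X i) = L := by omega
  simp only [e1] at hy
  simp only [e2] at hx
  rw [← hlast] at hx hy
  have hxy := hfin i
  rw [mul_assoc]
  generalize d * Mfun (@Fintype.card V.Q V.fintypeQ) i.1 = D at *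
  have hk : L - Y i < D := spl_arith _ _ h3 (by omega)
  refine ⟨by omega, fun j hij => ?_⟩
  have h1 := hdec i j hij
  have h2 := hfin j
  constructor <;> omega
end
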